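/- Let T = k* act on B = k[x_{-n}, x_{-n+1}, ..., x_0, ..., x_n] with t·x_i = t^i x_i. Then the cardinality of a minimal generating set for B^T is O(n · e^{12√n · log(2n)}). -/

import Mathlib

/-!
The invariants are spanned by the monomials of weight zero, so the monomials of the minimal
zero-sum multisets of variables generate them. Apart from `x_0`, such a multiset is a primitive
pair: multisets `P`, `Q` of parts in `{1, …, n}` with equal sums and no proper nonempty
subidentity. It suffices to show that at most `exp (6√n log (2n))` multisets occur as `P`.

Adjoin to a multiset `T` parts of `P` one after the other, as long as they enlarge the density of
the set of subset sums of `T`, smoothed at scale `n`. This density is bounded, and after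
`O(n / μ + log n)` steps all remaining parts are steady: they are approximate periods, with a loss
of at most `μ`, of the set of subset sums. If there are many possible steady parts, more than
`4096 μ`, and the remaining parts are coprime, then the subset sums of `T` nearly fill a long
window, and those of two such families fill an interval. Some part of `Q` has its sum in that
interval, extended by the remaining parts, which contradicts primitivity unless the remaining
parts have sum at most `n`, so that few of them exceed `4096 μ`. If the remaining parts have a
common divisor, divide by it and continue; if there are at most `4096 μ` possible steady parts,
they carry all remaining parts.

Hence all but `O(n / μ + (log n)²)` parts of `P` lie in a set of at most `4096 μ` numbers, and
there are few such sets. Choosing `μ = 130 √n` leaves at most `√n` exceptional parts; applying the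
argument again inside the resulting set, with `μ = √n / 4096`, leaves at most `√n` values.
-/

open MvPolynomial

variable (k : Type) [Field k]

/-- The action of `t ∈ k* = 𝔾ₘ` on a polynomial ring in which the variable `x_i` has
weight `w i`: the substitution `x_i ↦ t^{w i} x_i`. -/
noncomputable def torusAct {ι : Type} (w : ι → ℤ) (t : kˣ) :
    MvPolynomial ι k →ₐ[k] MvPolynomial ι k :=
  aeval (fun i => ((t ^ w i : kˣ) : k) • X i)

/-- The ring of invariants of the torus `k*` acting on a polynomial ring with the
variable `x_i` of weight `w i`. -/
noncomputable def torusInv {ι : Type} (w : ι → ℤ) : Subalgebra k (MvPolynomial ι k) where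
  carrier := {p | ∀ t : kˣ, torusAct k w t p = p}
  mul_mem' := by intro a b ha hb t; rw [map_mul, ha t, hb t]
  add_mem' := by intro a b ha hb t; rw [map_add, ha t, hb t]
  algebraMap_mem' := by intro r t; exact (torusAct k w t).commutes r

/-- The minimal cardinality of a (finite) generating set of a subalgebra. -/
noncomputable def minGens {R : Type} [CommRing R] [Algebra k R] (A : Subalgebra k R) : ℕ :=
  sInf {c : ℕ | ∃ S : Finset R, S.card = c ∧ Algebra.adjoin k (S : Set R) = A}

/-- The weight function for the variables `x_1, …, x_n, x_{-n}`: the variable `x_i`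
(encoded `some i`) has weight `i + 1 ∈ {1, …, n}`, and `x_{-n}` (encoded `none`) has
weight `-n`. -/
def wOpt (n : ℕ) : Option (Fin n) → ℤ :=
  fun o => Option.elim o (-(n : ℤ)) (fun i => (i : ℤ) + 1)

/-- The weight function for the variables `x_{-n}, x_{-n+1}, …, x_0, …, x_n`:
the `i`-th variable (for `i : Fin (2n+1)`) has weight `i - n`. -/
def wSym (n : ℕ) : Fin (2 * n + 1) → ℤ := fun i => (i : ℤ) - n

namespace TorusInvariants

section Weight

/-- The common ratio of the geometric weights at scale `N`, chosen so that moving by at most `N`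
changes a weight by a factor of at most `2`. -/
noncomputable def decay (N : ℕ) : ℝ := 1 - 1 / (2 * (N + 1))

lemma decay_nonneg (N : ℕ) : 0 ≤ decay N := by
  rw [decay, sub_nonneg, div_le_one (by positivity)]
  linarith [N.cast_nonneg (α := ℝ)]

lemma decay_lt_one (N : ℕ) : decay N < 1 :=
  sub_lt_self _ (by positivity)

lemma one_le_two_mul_decay_pow (N : ℕ) : 1 ≤ 2 * decay N ^ N := by
  have bernoulli : 1 + N * (-(1 / (2 * (N + 1))) : ℝ) ≤ (1 + -(1 / (2 * (N + 1)))) ^ N := by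
    refine one_add_mul_le_pow ?_ N
    have : 1 / (2 * ((N : ℝ) + 1)) ≤ 1 := by
      rw [div_le_one (by positivity)]
      linarith [N.cast_nonneg (α := ℝ)]
    linarith
  have half : (N : ℝ) * (1 / (2 * (N + 1))) ≤ 1 / 2 := by
    rw [mul_one_div, div_le_div_iff₀ (by positivity) two_pos]
    linarith
  rw [decay, sub_eq_add_neg]
  linarith

/-- The geometric weight of `y` at scale `N` around the centre `z`. -/
noncomputable def weight (N : ℕ) (z y : ℤ) : ℝ := decay N ^ (y - z).natAbs

lemma weight_nonneg (N : ℕ) (z y : ℤ) : 0 ≤ weight N z y :=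
  pow_nonneg (decay_nonneg N) _

lemma weight_le_weight {N : ℕ} {z z' y y' : ℤ} (h : (y' - z').natAbs ≤ (y - z).natAbs) :
    weight N z y ≤ weight N z' y' :=
  pow_le_pow_of_le_one (decay_nonneg N) (decay_lt_one N).le h

lemma weight_le_two_mul_weight {N : ℕ} {z y y' : ℤ} (h : (y' - y).natAbs ≤ N) :
    weight N z y ≤ 2 * weight N z y' := by
  have shifted : decay N ^ ((y - z).natAbs + N) ≤ weight N z y' :=
    pow_le_pow_of_le_one (decay_nonneg N) (decay_lt_one N).le (by omega)
  calc weight N z y = weight N z y * 1 := (mul_one _).symm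
    _ ≤ weight N z y * (2 * decay N ^ N) := by
      gcongr
      exacts [weight_nonneg N z y, one_le_two_mul_decay_pow N]
    _ = 2 * decay N ^ ((y - z).natAbs + N) := by rw [weight, pow_add]; ring
    _ ≤ 2 * weight N z y' := by gcongr

/-- The total weight of `B` around the centre `z`. -/
noncomputable def mass (N : ℕ) (B : Finset ℤ) (z : ℤ) : ℝ := ∑ y ∈ B, weight N z y

lemma exists_forall_mass_le (N : ℕ) (B : Finset ℤ) : ∃ z, ∀ z', mass N B z' ≤ mass N B z := by
  rcases B.eq_empty_or_nonempty with rfl | hB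
  · exact ⟨0, fun _ => by simp only [mass, Finset.sum_empty, le_refl]⟩
  set lo := B.min' hB
  set hi := B.max' hB
  have lo_le_hi : lo ≤ hi := B.min'_le_max' hB
  obtain ⟨z, -, hz⟩ := (Finset.Icc lo hi).exists_max_image (mass N B)
    ⟨lo, Finset.left_mem_Icc.2 lo_le_hi⟩
  have mass_le_mass_proj (z' : ℤ) : mass N B z' ≤ mass N B (max lo (min hi z')) := by
    refine Finset.sum_le_sum fun y hy => weight_le_weight ?_
    have := B.min'_le y hy
    have := B.le_max' y hy
    omega
  exact ⟨z, fun z' => (mass_le_mass_proj z').trans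
    (hz _ (Finset.mem_Icc.2 ⟨le_max_left _ _, max_le lo_le_hi (min_le_left _ _)⟩))⟩

/-- A centre around which `B` has maximal weight at scale `N`. -/
noncomputable def center (N : ℕ) (B : Finset ℤ) : ℤ := (exists_forall_mass_le N B).choose

/-- The maximal weight of `B` at scale `N`: a smooth version of the largest number of elements of
`B` in a window of length `N`. -/
noncomputable def peakMass (N : ℕ) (B : Finset ℤ) : ℝ := mass N B (center N B)

lemma mass_le_peakMass (N : ℕ) (B : Finset ℤ) (z : ℤ) : mass N B z ≤ peakMass N B :=
  (exists_forall_mass_le N B).choose_spec z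

lemma one_le_peakMass (N : ℕ) {B : Finset ℤ} (hB : B.Nonempty) : 1 ≤ peakMass N B := by
  obtain ⟨b, hb⟩ := hB
  calc (1 : ℝ) = weight N b b := by simp only [weight, sub_self, Int.natAbs_zero, pow_zero]
    _ ≤ mass N B b := Finset.single_le_sum (fun y _ => weight_nonneg N b y) hb
    _ ≤ peakMass N B := mass_le_peakMass N B b

lemma sum_decay_pow_le (N : ℕ) (S : Finset ℕ) : ∑ i ∈ S, decay N ^ i ≤ 2 * (N + 1) := by
  have summable := summable_geometric_of_lt_one (decay_nonneg N) (decay_lt_one N)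
  refine (summable.sum_le_tsum S fun i _ => pow_nonneg (decay_nonneg N) i).trans_eq ?_
  rw [tsum_geometric_of_lt_one (decay_nonneg N) (decay_lt_one N), decay, sub_sub_cancel,
    one_div, inv_inv]

lemma peakMass_le (N : ℕ) (B : Finset ℤ) : peakMass N B ≤ 4 * (N + 1) := by
  set z := center N B
  have half (S : Finset ℤ) (hS : Set.InjOn (fun y : ℤ => (y - z).natAbs) S) :
      ∑ y ∈ S, weight N z y ≤ 2 * (N + 1) := by
    rw [show ∑ y ∈ S, weight N z y = ∑ i ∈ S.image fun y : ℤ => (y - z).natAbs, decay N ^ i from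
      (Finset.sum_image hS).symm]
    exact sum_decay_pow_le N _
  have right := half {y ∈ B | z ≤ y} fun a ha b hb h => by
    simp only [Finset.coe_filter, Set.mem_ofPred_eq] at ha hb h; omega
  have left := half {y ∈ B | ¬ z ≤ y} fun a ha b hb h => by
    simp only [Finset.coe_filter, Set.mem_ofPred_eq] at ha hb h; omega
  rw [peakMass, mass, ← Finset.sum_filter_add_sum_filter_not B (z ≤ ·)]
  linarith

lemma card_le_two_mul_peakMass {N : ℕ} {B S : Finset ℤ} (hS : S ⊆ B) {z : ℤ}
    (near : ∀ y ∈ S, (y - z).natAbs ≤ N) : (S.card : ℝ) ≤ 2 * peakMass N B := by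
  calc (S.card : ℝ) = ∑ _y ∈ S, weight N z z := by
        simp only [weight, sub_self, Int.natAbs_zero, pow_zero, Finset.sum_const, nsmul_eq_mul,
          mul_one]
    _ ≤ ∑ y ∈ S, 2 * weight N z y := Finset.sum_le_sum fun y hy =>
        weight_le_two_mul_weight (near y hy)
    _ = 2 * ∑ y ∈ S, weight N z y := (Finset.mul_sum ..).symm
    _ ≤ 2 * mass N B z := by
        gcongr
        exact Finset.sum_le_sum_of_subset_of_nonneg hS fun y _ _ => weight_nonneg N z y
    _ ≤ 2 * peakMass N B := by
        gcongr
        exact mass_le_peakMass N B z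

end Weight

section Loss

/-- The weight, around the centre of `B`, of the part of `B` that leaves `B` when translated
by `x`. It is small exactly when `x` is an approximate period of `B`. -/
noncomputable def loss (N : ℕ) (B : Finset ℤ) (x : ℤ) : ℝ :=
  ∑ y ∈ B with y + x ∉ B, weight N (center N B) y

variable {N : ℕ} {B : Finset ℤ}

lemma sum_weight_image_add_right (N : ℕ) (z : ℤ) (S : Finset ℤ) (x : ℤ) :
    ∑ y ∈ S.image (· + x), weight N z y = ∑ y ∈ S, weight N z (y + x) :=
  Finset.sum_image (add_left_injective x).injOn

lemma sum_weight_le_two_mul_sum_weight_add {x : ℤ} (hx : x.natAbs ≤ N) (z : ℤ) (S : Finset ℤ) :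
    ∑ y ∈ S, weight N z y ≤ 2 * ∑ y ∈ S, weight N z (y + x) := by
  rw [Finset.mul_sum]
  exact Finset.sum_le_sum fun y _ => weight_le_two_mul_weight (by simpa using hx)

lemma loss_nonneg (N : ℕ) (B : Finset ℤ) (x : ℤ) : 0 ≤ loss N B x :=
  Finset.sum_nonneg fun _ _ => weight_nonneg _ _ _

lemma loss_zero (N : ℕ) (B : Finset ℤ) : loss N B 0 = 0 := by
  simp only [loss, add_zero, Finset.filter_notMem_eq_sdiff, sdiff_self, Finset.bot_eq_empty,
    Finset.sum_empty]

lemma sum_weight_add_mem (N : ℕ) (B : Finset ℤ) (x : ℤ) :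
    ∑ y ∈ B with y + x ∈ B, weight N (center N B) y = peakMass N B - loss N B x := by
  rw [eq_sub_iff_add_eq]
  exact Finset.sum_filter_add_sum_filter_not B _ _

lemma loss_add_le {x : ℤ} (hx : x.natAbs ≤ N) (x' : ℤ) :
    loss N B (x + x') ≤ loss N B x + 2 * loss N B x' := by
  set z := center N B
  set S := {y ∈ B | y + x ∈ B ∧ y + x + x' ∉ B}
  have translated : ∑ y ∈ S, weight N z (y + x) ≤ loss N B x' := by
    rw [← sum_weight_image_add_right]
    refine Finset.sum_le_sum_of_subset_of_nonneg ?_ fun _ _ _ => weight_nonneg _ _ _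
    rw [Finset.image_subset_iff]
    exact fun y hy => Finset.mem_filter.2 (Finset.mem_filter.1 hy).2
  have split : {y ∈ B | y + (x + x') ∉ B} ⊆ {y ∈ B | y + x ∉ B} ∪ S := by
    intro y
    simp only [S, Finset.mem_union, Finset.mem_filter, add_assoc]
    tauto
  calc loss N B (x + x') ≤ ∑ y ∈ {y ∈ B | y + x ∉ B} ∪ S, weight N z y :=
        Finset.sum_le_sum_of_subset_of_nonneg split fun _ _ _ => weight_nonneg _ _ _
    _ ≤ loss N B x + ∑ y ∈ S, weight N z y := by
        rw [loss, ← Finset.sum_union_inter]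
        exact le_add_of_nonneg_right (Finset.sum_nonneg fun _ _ => weight_nonneg _ _ _)
    _ ≤ loss N B x + 2 * loss N B x' := by
        linarith [sum_weight_le_two_mul_sum_weight_add hx z S]

/-- Around a centre of maximal weight, translating by `-x` cannot increase the weight of `B`. -/
lemma sum_weight_sub_notMem_le_loss (N : ℕ) (B : Finset ℤ) (x : ℤ) :
    ∑ y ∈ B with y - x ∉ B, weight N (center N B) (y - x) ≤ loss N B x := by
  set z := center N B
  have recentred : ∑ y ∈ B, weight N z (y - x) ≤ peakMass N B := by
    refine le_trans (le_of_eq (Finset.sum_congr rfl fun y _ => ?_)) (mass_le_peakMass N B (z + x))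
    rw [weight, weight, sub_sub, add_comm x z]
  have stay : ∑ y ∈ B with y - x ∈ B, weight N z (y - x) = peakMass N B - loss N B x := by
    rw [← sum_weight_add_mem]
    refine Finset.sum_nbij' (· - x) (· + x) ?_ ?_ ?_ ?_ fun _ _ => rfl <;>
      simp only [Finset.mem_filter, sub_add_cancel, add_sub_cancel_right, and_imp] <;> tauto
  rw [← Finset.sum_filter_add_sum_filter_not B (· - x ∈ B), stay] at recentred
  linarith

lemma loss_neg_le {x : ℤ} (hx : x.natAbs ≤ N) : loss N B (-x) ≤ 2 * loss N B x := by
  have shifted := sum_weight_le_two_mul_sum_weight_add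
    (show (-x).natAbs ≤ N by rwa [Int.natAbs_neg])
    (center N B) {y ∈ B | y + -x ∉ B}
  simp only [← sub_eq_add_neg] at shifted
  have := sum_weight_sub_notMem_le_loss N B x
  simp only [loss, ← sub_eq_add_neg] at this ⊢
  linarith

lemma peakMass_add_half_loss_le {x : ℤ} (hx : x.natAbs ≤ N) :
    peakMass N B + loss N B x / 2 ≤ peakMass N (B ∪ B.image (· + x)) := by
  set z := center N B
  set S := {y ∈ B | y + x ∉ B}
  have disj : Disjoint B (S.image (· + x)) := by
    simp only [Finset.disjoint_right, Finset.forall_mem_image]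
    exact fun y hy => (Finset.mem_filter.1 hy).2
  calc peakMass N B + loss N B x / 2
      ≤ ∑ y ∈ B, weight N z y + ∑ y ∈ S.image (· + x), weight N z y := by
        rw [sum_weight_image_add_right]
        have : loss N B x ≤ _ := sum_weight_le_two_mul_sum_weight_add hx z S
        change ∑ y ∈ B, weight N z y + _ ≤ _
        linarith
    _ = ∑ y ∈ B ∪ S.image (· + x), weight N z y := (Finset.sum_union disj).symm
    _ ≤ mass N (B ∪ B.image (· + x)) z :=
        Finset.sum_le_sum_of_subset_of_nonneg
          (Finset.union_subset_union_right (Finset.image_subset_image (Finset.filter_subset _ _)))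
          fun _ _ _ => weight_nonneg _ _ _
    _ ≤ peakMass N (B ∪ B.image (· + x)) := mass_le_peakMass N _ z

lemma exists_card_mul_le_card_filter_add_mem (N : ℕ) (hB : B.Nonempty) {Y : Finset ℤ} {L : ℝ}
    (hL : ∀ x ∈ Y, loss N B x ≤ L) :
    ∃ y ∈ B, Y.card * (peakMass N B - L) ≤ ({x ∈ Y | y + x ∈ B}.card : ℝ) * peakMass N B := by
  set z := center N B
  set M := peakMass N B
  have double_count : Y.card * (M - L) ≤ ∑ y ∈ B, weight N z y * ({x ∈ Y | y + x ∈ B}.card : ℝ) :=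
    calc Y.card * (M - L) = ∑ _x ∈ Y, (M - L) := by rw [Finset.sum_const, nsmul_eq_mul]
      _ ≤ ∑ x ∈ Y, ∑ y ∈ B with y + x ∈ B, weight N z y := by
          refine Finset.sum_le_sum fun x hx => ?_
          rw [sum_weight_add_mem]
          linarith [hL x hx]
      _ = ∑ y ∈ B, ∑ x ∈ Y with y + x ∈ B, weight N z y := by
          simp only [Finset.sum_filter]
          exact Finset.sum_comm
      _ = _ := by simp only [Finset.sum_const, nsmul_eq_mul, mul_comm]
  obtain ⟨y, hy, hmax⟩ := B.exists_max_image (fun y => {x ∈ Y | y + x ∈ B}.card) hB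
  refine ⟨y, hy, double_count.trans ?_⟩
  calc _ ≤ ∑ y' ∈ B, weight N z y' * ({x ∈ Y | y + x ∈ B}.card : ℝ) := by
        refine Finset.sum_le_sum fun y' hy' => mul_le_mul_of_nonneg_left ?_ (weight_nonneg _ _ _)
        exact_mod_cast hmax y' hy'
    _ = _ := by rw [← Finset.sum_mul, mul_comm]; rfl

end Loss

section Growth

open scoped Pointwise

variable {G : Type*} [AddGroup G] [DecidableEq G] {C : Finset G}

lemma mem_nsmul_of_succ_nsmul_subset (zero_mem : 0 ∈ C) (neg_mem : ∀ c ∈ C, -c ∈ C)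
    (generates : AddSubgroup.closure (C : Set G) = ⊤) {m : ℕ} (h : (m + 1) • C ⊆ m • C) (x : G) :
    x ∈ m • C := by
  have step {y c : G} (hy : y ∈ m • C) (hc : c ∈ C) : y + c ∈ m • C :=
    h (succ_nsmul C m ▸ Finset.add_mem_add hy hc)
  have hx : x ∈ AddSubgroup.closure (C : Set G) := generates ▸ AddSubgroup.mem_top x
  induction hx using AddSubgroup.closure_induction_right with
  | zero => exact Finset.zero_mem_nsmul zero_mem
  | add_right y _ c hc hy => exact step hy hc
  | add_neg_cancel y _ c hc hy => exact step hy (neg_mem c hc)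

lemma card_nsmul_add_card_le (zero_mem : 0 ∈ C) (neg_mem : ∀ c ∈ C, -c ∈ C) {m : ℕ}
    (h : ¬ (m + 2) • C ⊆ (m + 1) • C) : (m • C).card + C.card ≤ ((m + 3) • C).card := by
  obtain ⟨g, hg, hg'⟩ := Finset.not_subset.1 h
  have disj : Disjoint (m • C) (C.image (g + ·)) := by
    simp only [Finset.disjoint_right, Finset.forall_mem_image]
    intro c hc hgc
    refine hg' ?_
    rw [succ_nsmul, ← add_neg_cancel_right g c]
    exact Finset.add_mem_add hgc (neg_mem c hc)
  have translate_subset : C.image (g + ·) ⊆ (m + 3) • C := by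
    rw [Finset.image_subset_iff, succ_nsmul]
    exact fun c hc => Finset.add_mem_add hg hc
  calc (m • C).card + C.card = (m • C ∪ C.image (g + ·)).card := by
        rw [Finset.card_union_of_disjoint disj,
          Finset.card_image_of_injective _ (add_right_injective g)]
    _ ≤ ((m + 3) • C).card := Finset.card_le_card
        (Finset.union_subset (Finset.nsmul_subset_nsmul_right zero_mem (by omega)) translate_subset)

lemma forall_mem_nsmul_or_mul_card_le (zero_mem : 0 ∈ C) (neg_mem : ∀ c ∈ C, -c ∈ C)
    (generates : AddSubgroup.closure (C : Set G) = ⊤) (i : ℕ) :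
    (∀ x, x ∈ (3 * i + 1) • C) ∨ (i + 1) * C.card ≤ ((3 * i + 1) • C).card := by
  induction i with
  | zero => simp
  | succ i ih =>
    rcases ih with all | ih
    · exact .inl fun x => Finset.nsmul_subset_nsmul_right zero_mem (by omega) (all x)
    by_cases h : (3 * i + 1 + 2) • C ⊆ (3 * i + 1 + 1) • C
    · exact .inl fun x => Finset.nsmul_subset_nsmul_right zero_mem (by omega)
        (mem_nsmul_of_succ_nsmul_subset zero_mem neg_mem generates h x)
    · have := card_nsmul_add_card_le zero_mem neg_mem h
      right
      rw [show 3 * (i + 1) + 1 = 3 * i + 1 + 3 by ring]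
      linarith

lemma closure_image_natCast_zmod_eq_top {Λ : Set ℕ} (coprime : ∀ g, (∀ s ∈ Λ, g ∣ s) → g = 1)
    (a : ℕ) : AddSubgroup.closure ((↑) '' Λ : Set (ZMod a)) = ⊤ := by
  set H := AddSubgroup.closure ((↑) '' Λ : Set (ZMod a))
  have cast_mem {m : ℕ} (hm : m ∈ AddSubmonoid.closure Λ) : (m : ZMod a) ∈ H := by
    have le : AddSubmonoid.closure Λ ≤ H.toAddSubmonoid.comap (Nat.castAddMonoidHom (ZMod a)) :=
      AddSubmonoid.closure_le.2 fun s hs => AddSubgroup.subset_closure (Set.mem_image_of_mem _ hs)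
    exact le hm
  obtain ⟨N, hN⟩ := Nat.exists_mem_closure_of_ge Λ
  have gcd_eq_one := coprime _ fun s hs => Nat.setGcd_dvd_of_mem hs
  have one_mem : (1 : ZMod a) ∈ H := by
    have succ_mem := cast_mem (hN (N + 1) N.le_succ (by simp only [gcd_eq_one, one_dvd]))
    have self_mem := cast_mem (hN N le_rfl (by simp only [gcd_eq_one, one_dvd]))
    simpa using H.sub_mem succ_mem self_mem
  rw [eq_top_iff]
  intro x _
  obtain ⟨z, rfl⟩ := ZMod.intCast_surjective x
  simpa using H.zsmul_mem one_mem z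

end Growth

section DenseWindow

open scoped Pointwise

variable {N : ℕ} {B : Finset ℤ} {μ : ℝ}

lemma exists_val_add_intCast_eq {a : ℕ} [NeZero a] (b : ZMod a) {t : ℤ} (ht : t.natAbs ≤ a) :
    ∃ q : ℤ, q.natAbs ≤ 1 ∧ ((b + t).val : ℤ) = b.val + (t + q * a) := by
  have a_pos : (0 : ℤ) < a := by exact_mod_cast Nat.pos_of_neZero a
  have b_lt : (b.val : ℤ) < a := by exact_mod_cast b.val_lt
  have lower : -1 ≤ (b.val + t) / (a : ℤ) := Int.le_ediv_of_mul_le a_pos (by omega)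
  have upper : (b.val + t) / (a : ℤ) < 2 := Int.ediv_lt_of_lt_mul a_pos (by omega)
  refine ⟨-((b.val + t) / a), by omega, ?_⟩
  have cast_eq : b + t = ((b.val + t : ℤ) : ZMod a) := by
    rw [Int.cast_add, Int.cast_natCast, ZMod.natCast_zmod_val]
  rw [cast_eq, ZMod.val_intCast, Int.emod_def]
  ring

lemma loss_val_le_of_mem_nsmul {a : ℕ} [NeZero a] (ha : a ≤ N) (loss_a : loss N B a ≤ μ)
    {C : Finset (ZMod a)}
    (hC : ∀ c ∈ C, ∃ t : ℤ, (t : ZMod a) = c ∧ t.natAbs ≤ a ∧ loss N B t ≤ 2 * μ) (j : ℕ) :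
    ∀ x ∈ j • C, loss N B x.val ≤ 12 * j * μ := by
  induction j with
  | zero =>
    intro x hx
    rw [zero_nsmul, Finset.mem_zero] at hx
    rw [hx, ZMod.val_zero, Nat.cast_zero, Nat.cast_zero, loss_zero, mul_zero, zero_mul]
  | succ j ih =>
    intro x hx
    rw [succ_nsmul] at hx
    obtain ⟨b, hb, c, hc, rfl⟩ := Finset.mem_add.1 hx
    obtain ⟨t, rfl, ht, loss_t⟩ := hC c hc
    obtain ⟨q, hq, val_eq⟩ := exists_val_add_intCast_eq b ht
    have a_le : (a : ℤ).natAbs ≤ N := by rwa [Int.natAbs_natCast]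
    have loss_multiple : loss N B (q * a) ≤ 2 * μ := by
      have := loss_nonneg N B a
      obtain rfl | rfl | rfl : q = 0 ∨ q = 1 ∨ q = -1 := by omega
      · rw [zero_mul, loss_zero]; linarith
      · rw [one_mul]; linarith
      · rw [neg_one_mul]; linarith [loss_neg_le (B := B) a_le]
    have loss_shift := loss_add_le (B := B) (ht.trans ha) (q * a)
    have loss_step := loss_add_le (B := B)
      (show (b.val : ℤ).natAbs ≤ N from b.val_lt.le.trans ha) (t + q * a)
    rw [val_eq]
    push_cast
    linarith [ih b hb]

lemma injOn_natCast_zmod_Icc (a : ℕ) : Set.InjOn (Nat.cast : ℕ → ZMod a) (Set.Icc 1 a) := by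
  intro x hx y hy h
  refine ((ZMod.natCast_eq_natCast_iff x y a).1 h).eq_of_abs_lt ?_
  rw [abs_lt]
  constructor <;> linarith [hx.1, hx.2, hy.1, hy.2]

/-- The residues modulo `a` of the elements of `Λ` and of their negatives. -/
def signedResidues (a : ℕ) (Λ : Finset ℕ) : Finset (ZMod a) :=
  Λ.image (↑) ∪ -Λ.image (↑)

lemma mem_signedResidues {a : ℕ} {Λ : Finset ℕ} {c : ZMod a} :
    c ∈ signedResidues a Λ ↔ ∃ s ∈ Λ, (s : ZMod a) = c ∨ (s : ZMod a) = -c := by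
  simp only [signedResidues, Finset.mem_union, Finset.mem_neg', Finset.mem_image, ← exists_or,
    ← and_or_left]

lemma neg_mem_signedResidues {a : ℕ} {Λ : Finset ℕ} {c : ZMod a} (hc : c ∈ signedResidues a Λ) :
    -c ∈ signedResidues a Λ := by
  simpa only [mem_signedResidues, neg_neg, or_comm] using hc

lemma card_le_card_signedResidues {a : ℕ} {Λ : Finset ℕ} (hΛ : ∀ s ∈ Λ, s ∈ Set.Icc 1 a) :
    Λ.card ≤ (signedResidues a Λ).card := by
  rw [← Finset.card_image_of_injOn ((injOn_natCast_zmod_Icc a).mono hΛ)]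
  exact Finset.card_le_card Finset.subset_union_left

lemma closure_signedResidues_eq_top {Λ : Finset ℕ} (coprime : ∀ g, (∀ s ∈ Λ, g ∣ s) → g = 1)
    (a : ℕ) : AddSubgroup.closure (signedResidues a Λ : Set (ZMod a)) = ⊤ := by
  rw [eq_top_iff, ← closure_image_natCast_zmod_eq_top (Λ := (Λ : Set ℕ)) coprime a]
  refine AddSubgroup.closure_mono ?_
  rw [← Finset.coe_image]
  exact Finset.coe_subset.2 Finset.subset_union_left

/-- The translations by at most `N` that are approximate periods of `B`, up to a loss of `μ`. -/
noncomputable def nearPeriods (N : ℕ) (B : Finset ℤ) (μ : ℝ) : Finset ℕ :=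
  {x ∈ Finset.Icc 1 N | loss N B x < μ}

lemma mem_nearPeriods {x : ℕ} :
    x ∈ nearPeriods N B μ ↔ (1 ≤ x ∧ x ≤ N) ∧ loss N B x < μ := by
  rw [nearPeriods, Finset.mem_filter, Finset.mem_Icc]

lemma exists_intCast_eq_of_mem_signedResidues {a : ℕ}
    (ha_max : ∀ s ∈ nearPeriods N B μ, s ≤ a) {c : ZMod a}
    (hc : c ∈ signedResidues a (nearPeriods N B μ)) :
    ∃ t : ℤ, (t : ZMod a) = c ∧ t.natAbs ≤ a ∧ loss N B t ≤ 2 * μ := by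
  obtain ⟨s, hs, hsc⟩ := mem_signedResidues.1 hc
  obtain ⟨⟨-, s_le⟩, loss_s⟩ := mem_nearPeriods.1 hs
  have s_natAbs : (s : ℤ).natAbs = s := Int.natAbs_natCast s
  have loss_nonneg := loss_nonneg N B s
  rcases hsc with rfl | hsc
  · exact ⟨s, Int.cast_natCast s, s_natAbs.trans_le (ha_max s hs), by linarith⟩
  · refine ⟨-s, by rw [Int.cast_neg, Int.cast_natCast, hsc, neg_neg], ?_, ?_⟩
    · rw [Int.natAbs_neg]
      exact s_natAbs.trans_le (ha_max s hs)
    · linarith [loss_neg_le (B := B) (s_natAbs.trans_le s_le)]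

lemma card_le_of_loss_val_le {a : ℕ} [NeZero a] (ha : a ≤ N) (hB : B.Nonempty)
    {X : Finset (ZMod a)} (hX : ∀ x ∈ X, loss N B x.val ≤ peakMass N B / 16) :
    15 * (X.card : ℝ) ≤ 32 * peakMass N B := by
  set Y := X.image fun x => (x.val : ℤ)
  have card_Y : Y.card = X.card :=
    Finset.card_image_of_injective _ (Nat.cast_injective.comp (ZMod.val_injective a))
  obtain ⟨y, -, many⟩ := exists_card_mul_le_card_filter_add_mem N hB (Y := Y)
    (Finset.forall_mem_image.2 hX)
  have few : ({x ∈ Y | y + x ∈ B}.card : ℝ) ≤ 2 * peakMass N B := by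
    rw [← Finset.card_image_of_injective _ (add_right_injective y)]
    refine card_le_two_mul_peakMass (z := y) ?_ ?_ <;>
      simp only [Finset.image_subset_iff, Finset.forall_mem_image, Finset.mem_filter, Y, and_imp]
    · exact fun _ _ h => h
    · intro x _ _
      have := x.val_lt
      omega
  have pos := one_le_peakMass N hB
  rw [card_Y] at many
  nlinarith

/-- The sums of few near periods already cover all residues modulo the largest near period `a`:
otherwise they would be more numerous than the translations of small loss can be. -/
lemma loss_le_of_lt_mem_nearPeriods (hB : B.Nonempty)
    (many : 4096 * μ ≤ (nearPeriods N B μ).card) (heavy : 4096 * μ ≤ peakMass N B)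
    (coprime : ∀ g, (∀ s ∈ nearPeriods N B μ, g ∣ s) → g = 1) {a : ℕ}
    (ha : a ∈ nearPeriods N B μ) (ha_max : ∀ s ∈ nearPeriods N B μ, s ≤ a) {x : ℕ} (hx : x < a) :
    loss N B x ≤ peakMass N B / 16 := by
  have : NeZero a := ⟨(Nat.zero_le x).trans_lt hx |>.ne'⟩
  set Λ := nearPeriods N B μ
  set M := peakMass N B
  obtain ⟨⟨-, a_le⟩, loss_a⟩ := mem_nearPeriods.1 ha
  have M_pos : 1 ≤ M := one_le_peakMass N hB
  have Λ_pos : (0 : ℝ) < Λ.card := by exact_mod_cast Finset.card_pos.2 ⟨a, ha⟩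
  have μ_pos : 0 < μ := (loss_nonneg N B a).trans_lt loss_a
  obtain ⟨i, i_gt, i_le⟩ : ∃ i : ℕ, 3 * M < (i + 1) * Λ.card ∧ i * Λ.card ≤ 3 * M := by
    refine ⟨⌊3 * M / Λ.card⌋₊, ?_, ?_⟩
    · exact (div_lt_iff₀ Λ_pos).1 (Nat.lt_floor_add_one _)
    · exact (le_div_iff₀ Λ_pos).1 (Nat.floor_le (by positivity))
  have small_loss (c) (hc : c ∈ (3 * i + 1) • signedResidues a Λ) :
      loss N B c.val ≤ M / 16 := by
    refine (loss_val_le_of_mem_nsmul a_le loss_a.le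
      (fun c => exists_intCast_eq_of_mem_signedResidues ha_max) _ c hc).trans ?_
    have : 4096 * μ * i ≤ 3 * M := by nlinarith
    push_cast
    linarith
  have zero_mem : 0 ∈ signedResidues a Λ :=
    mem_signedResidues.2 ⟨a, ha, .inl (CharP.cast_eq_zero _ a)⟩
  rcases forall_mem_nsmul_or_mul_card_le zero_mem (fun c => neg_mem_signedResidues)
    (closure_signedResidues_eq_top coprime a) i with all | large
  · simpa only [ZMod.val_cast_of_lt hx] using small_loss x (all x)
  · have card_le := card_le_card_signedResidues fun s hs =>
      ⟨(mem_nearPeriods.1 hs).1.1, ha_max s hs⟩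
    have large' : (i + 1) * (Λ.card : ℝ) ≤ ((3 * i + 1) • signedResidues a Λ).card := by
      exact_mod_cast (Nat.mul_le_mul_left _ card_le).trans large
    linarith [card_le_of_loss_val_le a_le hB small_loss]

lemma exists_four_mul_card_missing_le (hB : B.Nonempty)
    (many : 4096 * μ ≤ (nearPeriods N B μ).card) (heavy : 4096 * μ ≤ peakMass N B)
    (coprime : ∀ g, (∀ s ∈ nearPeriods N B μ, g ∣ s) → g = 1) {h : ℕ}
    (hh : h ∈ nearPeriods N B μ) :
    ∃ y : ℤ, 4 * {x ∈ Finset.range (2 * h) | y + (x : ℕ) ∉ B}.card ≤ h := by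
  obtain ⟨a, ha, ha_max⟩ := (nearPeriods N B μ).exists_max_image id ⟨h, hh⟩
  obtain ⟨⟨-, a_le⟩, loss_a⟩ := mem_nearPeriods.1 ha
  have small_loss := @loss_le_of_lt_mem_nearPeriods _ _ _ hB many heavy coprime _ ha ha_max
  have small_loss' (x : ℕ) (hx : x < 2 * h) : loss N B x ≤ peakMass N B / 8 := by
    rcases lt_or_ge x a with hxa | hxa
    · linarith [small_loss hxa, one_le_peakMass N hB]
    · have hx' : x - a < a := by have := ha_max h hh; simp only [id] at this; omega
      have := loss_add_le (B := B) (show ((x - a : ℕ) : ℤ).natAbs ≤ N by omega) a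
      rw [← Nat.cast_add, Nat.sub_add_cancel hxa] at this
      linarith [small_loss hx', one_le_peakMass N hB]
  obtain ⟨y, -, hy⟩ := exists_card_mul_le_card_filter_add_mem N hB
    (Y := (Finset.range (2 * h)).map Nat.castEmbedding) (L := peakMass N B / 8) (by
      simpa only [Finset.forall_mem_map, Finset.mem_range, Nat.castEmbedding_apply]
        using small_loss')
  refine ⟨y, ?_⟩
  rw [Finset.filter_map, Finset.card_map, Finset.card_map, Finset.card_range] at hy
  have total := Finset.card_filter_add_card_filter_not (s := Finset.range (2 * h))
    (fun x : ℕ => y + x ∈ B)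
  rw [Finset.card_range] at total
  have present : (2 * h : ℝ) * (7 / 8) ≤ {x ∈ Finset.range (2 * h) | y + (x : ℕ) ∈ B}.card := by
    refine le_of_mul_le_mul_right ?_ (one_pos.trans_le (one_le_peakMass N hB))
    refine le_trans (le_of_eq ?_) hy
    push_cast
    ring
  have present' : 7 * h ≤ 4 * {x ∈ Finset.range (2 * h) | y + (x : ℕ) ∈ B}.card := by
    have : (7 * h : ℝ) ≤ 4 * {x ∈ Finset.range (2 * h) | y + (x : ℕ) ∈ B}.card := by linarith
    exact_mod_cast this
  omega

end DenseWindow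

section SubsetSums

/-- The sums of the submultisets of `T`. -/
def subsetSums (T : Multiset ℕ) : Finset ℤ :=
  (T.powerset.map fun t => (t.sum : ℤ)).toFinset

lemma mem_subsetSums {T : Multiset ℕ} {v : ℤ} :
    v ∈ subsetSums T ↔ ∃ t ≤ T, (t.sum : ℤ) = v := by
  simp only [subsetSums, Multiset.mem_toFinset, Multiset.mem_map, Multiset.mem_powerset]

lemma subsetSums_nonempty (T : Multiset ℕ) : (subsetSums T).Nonempty :=
  ⟨0, mem_subsetSums.2 ⟨0, Multiset.zero_le T, rfl⟩⟩

lemma add_mem_subsetSums {T U : Multiset ℕ} {v w : ℤ} (hv : v ∈ subsetSums T)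
    (hw : w ∈ subsetSums U) : v + w ∈ subsetSums (T + U) := by
  obtain ⟨t, ht, rfl⟩ := mem_subsetSums.1 hv
  obtain ⟨u, hu, rfl⟩ := mem_subsetSums.1 hw
  exact mem_subsetSums.2 ⟨t + u, add_le_add ht hu, by rw [Multiset.sum_add, Nat.cast_add]⟩

lemma subsetSums_cons (a : ℕ) (T : Multiset ℕ) :
    subsetSums (a ::ₘ T) = subsetSums T ∪ (subsetSums T).image (· + (a : ℤ)) := by
  ext v
  simp only [subsetSums, Multiset.powerset_cons, Multiset.map_add, Multiset.map_map,
    Multiset.toFinset_add, Finset.mem_union, Finset.mem_image, Multiset.mem_toFinset,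
    Multiset.mem_map, Function.comp_apply, Multiset.sum_cons, Nat.cast_add,
    exists_exists_and_eq_and, add_comm (a : ℤ)]

lemma mem_subsetSums_add_of_interval {T W : Multiset ℕ} {lo : ℤ} {len : ℕ}
    (hT : ∀ v : ℤ, lo ≤ v → v < lo + len → v ∈ subsetSums T) (hW : ∀ w ∈ W, w ≤ len) :
    ∀ v : ℤ, lo ≤ v → v < lo + len + W.sum → v ∈ subsetSums (T + W) := by
  induction W using Multiset.induction with
  | empty => simpa using hT
  | cons a W ih =>
    obtain ⟨a_le, hW⟩ := Multiset.forall_mem_cons.1 hW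
    intro v lo_le v_lt
    rw [Multiset.sum_cons, Nat.cast_add] at v_lt
    rw [Multiset.add_cons, subsetSums_cons, Finset.mem_union, Finset.mem_image]
    by_cases h : v < lo + len + W.sum
    · exact .inl (ih hW v lo_le h)
    · exact .inr ⟨v - a, ih hW _ (by omega) (by omega), sub_add_cancel v _⟩

lemma exists_add_eq_of_missing_le {A B : Finset ℤ} {h : ℕ} {y z : ℤ}
    (hA : 4 * {x ∈ Finset.range (2 * h) | y + (x : ℕ) ∉ A}.card ≤ h)
    (hB : 4 * {x ∈ Finset.range (2 * h) | z + (x : ℕ) ∉ B}.card ≤ h)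
    {u : ℕ} (h_le : h ≤ u) (u_lt : u < 3 * h) : ∃ a ∈ A, ∃ b ∈ B, a + b = y + z + u := by
  set I := Finset.Ico (u + 1 - 2 * h) (min (u + 1) (2 * h))
  set missA := {x ∈ Finset.range (2 * h) | y + (x : ℕ) ∉ A}
  set missB := {x ∈ Finset.range (2 * h) | z + (x : ℕ) ∉ B}
  have h_le_card : h ≤ I.card := by rw [Nat.card_Ico]; omega
  by_contra! none
  have covered : I ⊆ missA ∪ missB.image (u - ·) := by
    intro x hx
    rw [Finset.mem_Ico] at hx
    by_cases hxA : y + x ∈ A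
    · refine Finset.mem_union_right _ (Finset.mem_image.2 ⟨u - x, ?_, by omega⟩)
      refine Finset.mem_filter.2 ⟨Finset.mem_range.2 (by omega), fun hxB => none _ hxA _ hxB ?_⟩
      omega
    · exact Finset.mem_union_left _ (Finset.mem_filter.2 ⟨Finset.mem_range.2 (by omega), hxA⟩)
  have := (Finset.card_le_card covered).trans (Finset.card_union_le _ _)
  have := Finset.card_image_le (s := missB) (f := (u - ·))
  omega

end SubsetSums

section PrimitivePair

lemma exists_le_card_le_dvd_sum {Q : Multiset ℕ} {d : ℕ} (hd : 0 < d) (hQ : d ≤ Q.card) :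
    ∃ q ≤ Q, q ≠ 0 ∧ q.card ≤ d ∧ d ∣ q.sum := by
  have : NeZero d := ⟨hd.ne'⟩
  induction Q using Quotient.inductionOn with | _ l
  rw [Multiset.quot_mk_to_coe, Multiset.coe_card] at hQ
  obtain ⟨i, j, i_ne_j, same_residue⟩ := Fintype.exists_ne_map_eq_of_card_lt
    (fun i : Fin (d + 1) => ((l.take i).sum : ZMod d)) (by simp [ZMod.card])
  wlog hij : i < j generalizing i j
  · exact this j i i_ne_j.symm same_residue.symm (i_ne_j.lt_or_gt.resolve_left hij)
  have hij' : (i : ℕ) < j := hij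
  have sublist : ((l.take j).drop i).Sublist l :=
    (List.drop_sublist _ _).trans (List.take_sublist _ _)
  have length : ((l.take j).drop i).length = j - i := by
    rw [List.length_drop, List.length_take, min_eq_left (by omega)]
  refine ⟨((l.take j).drop i : List ℕ), Multiset.coe_le.2 sublist.subperm, ?_, ?_, ?_⟩
  · rw [← Multiset.card_pos, Multiset.coe_card, length]
    omega
  · rw [Multiset.coe_card, length]
    omega
  · have sum_take : (l.take j).sum = (l.take i).sum + ((l.take j).drop i).sum := by
      rw [← List.sum_take_add_sum_drop (l.take j) i, List.take_take, min_eq_left hij'.le]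
    rw [Multiset.sum_coe, ← ZMod.natCast_eq_zero_iff]
    simpa [sum_take] using same_residue

lemma exists_le_sum_eq_mul {Q : Multiset ℕ} {n d lo : ℕ} (hQ : ∀ x ∈ Q, x ≤ n) (hd : 0 < d)
    (hlo : 0 < lo) (sum_ge : d * (lo + n) ≤ Q.sum) :
    ∃ q ≤ Q, ∃ v, lo ≤ v ∧ v < lo + n ∧ q.sum = d * v := by
  set F := {q ∈ Set.Iic Q | d ∣ q.sum ∧ q.sum < d * (lo + n)}
  have zero_mem : 0 ∈ F :=
    ⟨Multiset.zero_le Q, dvd_zero d, Nat.mul_pos hd (Nat.add_pos_left hlo n)⟩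
  obtain ⟨q, ⟨q_le, ⟨v, hv⟩, sum_lt⟩, q_max⟩ :=
    ((Set.finite_Iic Q).sep _).exists_maximal ⟨0, zero_mem⟩
  refine ⟨q, q_le, v, ?_, Nat.lt_of_mul_lt_mul_left (hv ▸ sum_lt), hv⟩
  by_contra! v_lt
  have card_mul_ge {r : Multiset ℕ} (hr : r ≤ Q) : r.sum ≤ r.card * n :=
    Multiset.sum_le_card_nsmul r n fun x hx => hQ x (Multiset.mem_of_le hr hx)
  have sum_q_lt : q.sum < d * lo := hv ▸ Nat.mul_lt_mul_of_pos_left v_lt hd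
  have card_rest : d ≤ (Q - q).card := by
    have rest_le := card_mul_ge (Multiset.sub_le_self Q q)
    have rest_sum : (Q - q).sum + q.sum = Q.sum := by
      rw [← Multiset.sum_add, Multiset.sub_add_cancel q_le]
    exact le_of_not_gt fun h => by nlinarith
  obtain ⟨b, b_le, b_ne, b_card, b_dvd⟩ := exists_le_card_le_dvd_sum hd card_rest
  have sum_b : b.sum ≤ d * n :=
    (card_mul_ge (b_le.trans (Multiset.sub_le_self Q q))).trans (Nat.mul_le_mul_right n b_card)
  have mem : q + b ∈ F := by
    refine ⟨?_, ?_, ?_⟩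
    · exact (add_le_add_right b_le q).trans_eq (add_tsub_cancel_of_le q_le)
    · rw [Multiset.sum_add]; exact dvd_add ⟨v, hv⟩ b_dvd
    · rw [Multiset.sum_add]; linarith
  have := Multiset.card_le_card (q_max mem (Multiset.le_add_right q b))
  rw [Multiset.card_add] at this
  have := Multiset.card_pos.2 b_ne
  omega

/-- A primitive partition identity `∑ P = ∑ Q` with parts in `{1, …, n}`: no proper nonempty
subidentity holds. The empty identity is allowed. -/
structure IsPrimitivePair (n : ℕ) (P Q : Multiset ℕ) : Prop where
  mem_left : ∀ x ∈ P, x ∈ Finset.Icc 1 n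
  mem_right : ∀ x ∈ Q, x ∈ Finset.Icc 1 n
  sum_eq : P.sum = Q.sum
  eq_of_sum_eq : ∀ p ≤ P, ∀ q ≤ Q, p.sum = q.sum → p = 0 ∧ q = 0 ∨ p = P ∧ q = Q

namespace IsPrimitivePair

variable {n : ℕ} {P Q : Multiset ℕ}

lemma symm (h : IsPrimitivePair n P Q) : IsPrimitivePair n Q P where
  mem_left := h.mem_right
  mem_right := h.mem_left
  sum_eq := h.sum_eq.symm
  eq_of_sum_eq q hq p hp hqp := by simpa only [and_comm] using h.eq_of_sum_eq p hp q hq hqp.symm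

/-- Any part of `Q` whose sum is a multiple `d * v` of `d` with `lo ≤ v < lo + n` would be balanced
by a proper part of `P`. -/
lemma exists_notMem_subsetSums (h : IsPrimitivePair n P Q) {d : ℕ} (hd : 0 < d) {V : Multiset ℕ}
    (hV : V.map (d * ·) ≤ P) {lo : ℤ} (hlo : 0 < lo) :
    ∃ v ∈ Set.Icc lo (lo + n), v ∉ subsetSums V := by
  by_contra! all
  lift lo to ℕ using hlo.le
  have sum_map (t : Multiset ℕ) : (t.map (d * ·)).sum = d * t.sum := by
    rw [Multiset.sum_map_mul_left, Multiset.map_id']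
  obtain ⟨t₁, ht₁, t₁_sum⟩ := mem_subsetSums.1 (all (lo + n) ⟨by omega, le_rfl⟩)
  obtain ⟨r, rfl⟩ := Multiset.le_iff_exists_add.1 ((Multiset.map_le_map ht₁).trans hV)
  have sum_P : d * (lo + n) ≤ (t₁.map (d * ·) + r).sum := by
    rw [Multiset.sum_add, sum_map, show t₁.sum = lo + n from mod_cast t₁_sum]
    exact Nat.le_add_right _ _
  obtain ⟨q, hq, v, lo_le, v_lt, q_sum⟩ := exists_le_sum_eq_mul
    (fun x hx => (Finset.mem_Icc.1 (h.mem_right x hx)).2) hd (by omega) (sum_P.trans_eq h.sum_eq)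
  obtain ⟨t, ht, t_sum⟩ := mem_subsetSums.1 (all v ⟨by omega, by omega⟩)
  have balanced : (t.map (d * ·)).sum = q.sum := by
    rw [sum_map, q_sum, Nat.cast_inj.1 t_sum]
  rcases h.eq_of_sum_eq _ ((Multiset.map_le_map ht).trans hV) q hq balanced with
    ⟨-, rfl⟩ | ⟨-, rfl⟩
  · exact (Nat.mul_pos hd (by omega)).ne q_sum
  · rw [← h.sum_eq] at q_sum
    exact (Nat.mul_lt_mul_of_pos_left v_lt hd).not_ge (q_sum ▸ sum_P)

lemma count_le (h : IsPrimitivePair n P Q) (x : ℕ) : P.count x ≤ n := by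
  by_contra! lt
  have hx := Finset.mem_Icc.1 (h.mem_left x (Multiset.count_pos.1 (Nat.zero_lt_of_lt lt)))
  have replicate_le : (Multiset.replicate (n + 1) 1).map (x * ·) ≤ P := by
    rw [Multiset.map_replicate, mul_one]
    exact Multiset.le_count_iff_replicate_le.1 lt
  obtain ⟨v, ⟨one_le, v_le⟩, hv⟩ := h.exists_notMem_subsetSums (by omega) replicate_le one_pos
  lift v to ℕ using by omega
  refine hv (mem_subsetSums.2 ⟨.replicate v 1, ?_, by simp⟩)
  exact Multiset.replicate_le_replicate 1 |>.2 (by omega)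

end IsPrimitivePair

end PrimitivePair

section Greedy

/-- The tolerance at scale `N` for an approximate period of the subset sums of `T`. -/
noncomputable def threshold (N : ℕ) (μ : ℝ) (T : Multiset ℕ) : ℝ :=
  min μ (peakMass N (subsetSums T) / 4096)

/-- The parts whose adjunction to `T` barely enlarges its set of subset sums. -/
noncomputable def steadyParts (N : ℕ) (μ : ℝ) (T : Multiset ℕ) : Finset ℕ :=
  nearPeriods N (subsetSums T) (threshold N μ T)

/-- A potential which increases by at least `1` whenever a part that is not steady is adjoined
to `T`. -/
noncomputable def potential (N : ℕ) (μ : ℝ) (T : Multiset ℕ) : ℝ :=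
  8193 * Real.log (peakMass N (subsetSums T)) + 2 * peakMass N (subsetSums T) / μ

/-- A bound for the potential, hence for the number of parts that are not steady. -/
noncomputable def potentialBound (N : ℕ) (μ : ℝ) : ℝ :=
  8193 * Real.log (4 * (N + 1)) + 8 * (N + 1) / μ

variable {N : ℕ} {μ : ℝ}

lemma steadyParts_subset_Icc (N : ℕ) (μ : ℝ) (T : Multiset ℕ) :
    steadyParts N μ T ⊆ Finset.Icc 1 N :=
  Finset.filter_subset _ _

lemma potential_nonneg (hμ : 0 < μ) (T : Multiset ℕ) : 0 ≤ potential N μ T := by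
  have one_le := one_le_peakMass N (subsetSums_nonempty T)
  have := Real.log_nonneg one_le
  unfold potential
  positivity

lemma potential_le_potentialBound (hμ : 0 < μ) (T : Multiset ℕ) :
    potential N μ T ≤ potentialBound N μ := by
  have one_le := one_le_peakMass N (subsetSums_nonempty T)
  have le := peakMass_le N (subsetSums T)
  have log_le := Real.log_le_log (one_pos.trans_le one_le) le
  have div_le : 2 * peakMass N (subsetSums T) / μ ≤ 8 * (N + 1) / μ :=
    div_le_div_of_nonneg_right (by linarith) hμ.le
  rw [potential, potentialBound]
  linarith

lemma potential_add_one_le (hμ : 0 < μ) {T : Multiset ℕ} {a : ℕ} (ha : a ∈ Finset.Icc 1 N)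
    (not_steady : a ∉ steadyParts N μ T) : potential N μ T + 1 ≤ potential N μ (a ::ₘ T) := by
  have threshold_le : threshold N μ T ≤ loss N (subsetSums T) a :=
    not_lt.1 fun lt => not_steady (mem_nearPeriods.2 ⟨Finset.mem_Icc.1 ha, lt⟩)
  have growth := peakMass_add_half_loss_le (B := subsetSums T) (x := a) (N := N)
    (by have := Finset.mem_Icc.1 ha; omega)
  rw [← subsetSums_cons] at growth
  have one_le := one_le_peakMass N (subsetSums_nonempty T)
  have := loss_nonneg N (subsetSums T) a
  rw [potential, potential]
  generalize peakMass N (subsetSums (a ::ₘ T)) = M' at *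
  rcases min_le_iff.1 threshold_le with le_loss | le_loss <;>
    generalize peakMass N (subsetSums T) = M at *
  · have log_le := Real.log_le_log (one_pos.trans_le one_le) (show M ≤ M' by linarith)
    have div_le : 2 * M / μ + 1 ≤ 2 * M' / μ := by
      rw [div_add_one hμ.ne']
      gcongr
      linarith
    linarith
  · have log_le : Real.log M + Real.log (8193 / 8192) ≤ Real.log M' := by
      rw [← Real.log_mul (by linarith) (by norm_num)]
      exact Real.log_le_log (by positivity) (by linarith)
    have log_ge := Real.one_sub_inv_le_log_of_pos (x := 8193 / 8192) (by norm_num)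
    norm_num at log_ge
    have div_le : 2 * M / μ ≤ 2 * M' / μ := by gcongr; linarith
    linarith

lemma exists_le_sub_subset_steadyParts (hμ : 0 < μ) {V : Multiset ℕ}
    (hV : ∀ x ∈ V, x ∈ Finset.Icc 1 N) :
    ∃ T ≤ V, (T.card : ℝ) ≤ potentialBound N μ ∧ ∀ a ∈ V - T, a ∈ steadyParts N μ T := by
  obtain ⟨T, ⟨T_le, card_le⟩, T_max⟩ := ((Set.finite_Iic V).sep
    fun T => (T.card : ℝ) ≤ potential N μ T).exists_maximal
    ⟨0, Multiset.zero_le V, by simpa using potential_nonneg hμ 0⟩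
  refine ⟨T, T_le, card_le.trans (potential_le_potentialBound hμ T), fun a ha => ?_⟩
  by_contra not_steady
  have cons_le : a ::ₘ T ≤ V := by
    calc a ::ₘ T = {a} + T := (Multiset.singleton_add a T).symm
      _ ≤ V - T + T := add_le_add_left (Multiset.singleton_le.2 ha) T
      _ = V := Multiset.sub_add_cancel T_le
  have grows := potential_add_one_le hμ
    (hV a (Multiset.mem_of_le (Multiset.sub_le_self V T) ha)) not_steady
  refine (Multiset.lt_cons_self T a).not_ge (T_max ⟨cons_le, ?_⟩ (Multiset.le_cons_self T a))
  rw [Multiset.card_cons, Nat.cast_add_one]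
  linarith

lemma exists_two_steady_families (hμ : 0 < μ) {V : Multiset ℕ}
    (hV : ∀ x ∈ V, x ∈ Finset.Icc 1 N) :
    ∃ T₁ T₂ W, T₁ + T₂ + W = V ∧
      (T₁.card : ℝ) ≤ potentialBound N μ ∧ (T₂.card : ℝ) ≤ potentialBound N μ ∧
      (∀ s ∈ W, s ∈ steadyParts N μ T₁) ∧ ∀ s ∈ W, s ∈ steadyParts N μ T₂ := by
  obtain ⟨T₁, T₁_le, card_T₁, steady₁⟩ := exists_le_sub_subset_steadyParts hμ hV
  obtain ⟨T₂, T₂_le, card_T₂, steady₂⟩ := exists_le_sub_subset_steadyParts hμ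
    fun x hx => hV x (Multiset.mem_of_le (Multiset.sub_le_self V T₁) hx)
  refine ⟨T₁, T₂, V - T₁ - T₂, ?_, card_T₁, card_T₂, fun s hs => ?_, steady₂⟩
  · rw [add_assoc, add_tsub_cancel_of_le T₂_le, add_tsub_cancel_of_le T₁_le]
  · exact steady₁ s (Multiset.mem_of_le (Multiset.sub_le_self _ _) hs)

end Greedy

section Saturation

variable {n N d : ℕ} {μ : ℝ} {P Q : Multiset ℕ}

lemma exists_window_of_subset_steadyParts {T W : Multiset ℕ}
    (hW : ∀ s ∈ W, s ∈ steadyParts N μ T) (many : 4096 * μ ≤ (steadyParts N μ T).card)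
    (coprime : ∀ g, (∀ s ∈ W, g ∣ s) → g = 1) {h : ℕ} (hh : h ∈ W) :
    ∃ y : ℤ, 4 * {x ∈ Finset.range (2 * h) | y + (x : ℕ) ∉ subsetSums T}.card ≤ h := by
  have le_left : threshold N μ T ≤ μ := min_le_left _ _
  have le_right : threshold N μ T ≤ peakMass N (subsetSums T) / 4096 := min_le_right _ _
  refine exists_four_mul_card_missing_le (subsetSums_nonempty T) (le_trans ?_ many) ?_
    (fun g hg => coprime g fun s hs => hg s (hW s hs)) (hW h hh) <;> linarith

/-- Two disjoint families of parts, each with many coprime steady parts, have subset sums filling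
an interval, which the remaining parts `W` lengthen by `∑ W`. -/
lemma IsPrimitivePair.sum_le_of_subset_steadyParts (h : IsPrimitivePair n P Q) (hd : 0 < d)
    {T₁ T₂ W : Multiset ℕ} (hP : (T₁ + T₂ + W).map (d * ·) ≤ P)
    (hT₁ : ∀ s ∈ W, s ∈ steadyParts N μ T₁) (hT₂ : ∀ s ∈ W, s ∈ steadyParts N μ T₂)
    (many₁ : 4096 * μ ≤ (steadyParts N μ T₁).card) (many₂ : 4096 * μ ≤ (steadyParts N μ T₂).card)
    (coprime : ∀ g, (∀ s ∈ W, g ∣ s) → g = 1) : W.sum ≤ n := by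
  by_contra! n_lt
  obtain ⟨a, ha, a_max⟩ := W.toFinset.exists_max_image id <| Multiset.toFinset_nonempty.2 <| by
    rintro rfl
    exact absurd n_lt (Nat.not_lt_zero n)
  simp only [Multiset.mem_toFinset, id] at ha a_max
  have a_pos := (Finset.mem_Icc.1 (steadyParts_subset_Icc N μ T₁ (hT₁ a ha))).1
  obtain ⟨y₁, hy₁⟩ := exists_window_of_subset_steadyParts hT₁ many₁ coprime ha
  obtain ⟨y₂, hy₂⟩ := exists_window_of_subset_steadyParts hT₂ many₂ coprime ha
  have interval (v : ℤ) (le_v : y₁ + y₂ + a ≤ v) (v_lt : v < y₁ + y₂ + a + (2 * a : ℕ)) :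
      v ∈ subsetSums (T₁ + T₂) := by
    obtain ⟨b₁, hb₁, b₂, hb₂, sum_eq⟩ := exists_add_eq_of_missing_le hy₁ hy₂
      (u := (v - y₁ - y₂).toNat) (by omega) (by omega)
    rw [show v = b₁ + b₂ by omega]
    exact add_mem_subsetSums hb₁ hb₂
  have nonneg : 0 ≤ y₁ + y₂ + a := by
    obtain ⟨t, -, sum_eq⟩ := mem_subsetSums.1 (interval _ le_rfl (by omega))
    exact sum_eq ▸ Nat.cast_nonneg _
  obtain ⟨v, ⟨lo_le, le_hi⟩, hv⟩ := h.exists_notMem_subsetSums hd hP (lo := y₁ + y₂ + a + 1)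
    (by omega)
  exact hv (mem_subsetSums_add_of_interval interval
    (fun w hw => (a_max w hw).trans (by omega)) v (by omega) (by omega))

lemma countP_notMem_Icc_le {W : Multiset ℕ} (one_le : ∀ x ∈ W, 1 ≤ x) (sum_le : W.sum ≤ n)
    (hμ : 0 < μ) :
    (W.countP (· ∉ Finset.Icc 1 ⌊4096 * μ⌋₊) : ℝ) ≤ n / (4096 * μ) := by
  rw [le_div_iff₀ (by positivity), Multiset.countP_eq_card_filter, ← nsmul_eq_mul]
  set large := W.filter (· ∉ Finset.Icc 1 ⌊4096 * μ⌋₊)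
  have large_le : large ≤ W := Multiset.filter_le _ _
  obtain ⟨rest, rest_eq⟩ := Multiset.le_iff_exists_add.1 large_le
  have lt_of_mem (x) (hx : x ∈ large) : 4096 * μ ≤ x := by
    have not_mem := (Multiset.mem_filter.1 hx).2
    rw [Finset.mem_Icc, not_and] at not_mem
    have lt := not_mem (one_le x (Multiset.mem_of_le large_le hx))
    exact (Nat.lt_of_floor_lt (not_le.1 lt)).le
  calc large.card • (4096 * μ) = (large.map (fun x : ℕ => (x : ℝ))).card • (4096 * μ) := by
        rw [Multiset.card_map]
    _ ≤ (large.map (fun x : ℕ => (x : ℝ))).sum :=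
        Multiset.card_nsmul_le_sum (Multiset.forall_mem_map_iff.2 lt_of_mem)
    _ = (large.sum : ℝ) := (Nat.cast_multiset_sum large).symm
    _ ≤ n := by
        rw [rest_eq, Multiset.sum_add] at sum_le
        exact_mod_cast (Nat.le_add_right _ _).trans sum_le

lemma IsPrimitivePair.exists_steadyParts_or_dvd_or_small (h : IsPrimitivePair n P Q) (hd : 0 < d)
    (hμ : 0 < μ) {V : Multiset ℕ} (hV : ∀ x ∈ V, x ∈ Finset.Icc 1 N) (hP : V.map (d * ·) ≤ P) :
    (∃ T ≤ V, (T.card : ℝ) ≤ potentialBound N μ ∧ ((steadyParts N μ T).card : ℝ) ≤ 4096 * μ ∧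
      (V.countP (· ∉ steadyParts N μ T) : ℝ) ≤ 2 * potentialBound N μ) ∨
    (∃ g ∈ Finset.Icc 2 N, (V.countP (¬ g ∣ ·) : ℝ) ≤ 2 * potentialBound N μ) ∨
    (V.countP (· ∉ Finset.Icc 1 ⌊4096 * μ⌋₊) : ℝ) ≤
      2 * potentialBound N μ + n / (4096 * μ) := by
  obtain ⟨T₁, T₂, W, rfl, card_T₁, card_T₂, steady₁, steady₂⟩ := exists_two_steady_families hμ hV
  have countP_le (p : ℕ → Prop) [DecidablePred p] :
      ((T₁ + T₂ + W).countP p : ℝ) ≤ 2 * potentialBound N μ + W.countP p := by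
    have : ((T₁ + T₂ + W).countP p : ℝ) ≤ T₁.card + T₂.card + W.countP p := by
      rw [Multiset.countP_add, Multiset.countP_add]
      exact_mod_cast add_le_add_left
        (add_le_add (T₁.countP_le_card p) (T₂.countP_le_card p)) (W.countP p)
    linarith
  have countP_le_of_forall {p : ℕ → Prop} [DecidablePred p] (hp : ∀ x ∈ W, ¬ p x) :
      ((T₁ + T₂ + W).countP p : ℝ) ≤ 2 * potentialBound N μ := by
    simpa only [Multiset.countP_eq_zero.2 hp, Nat.cast_zero, add_zero] using countP_le p
  have W_Icc (s) (hs : s ∈ W) := Finset.mem_Icc.1 (steadyParts_subset_Icc N μ _ (steady₂ s hs))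
  by_cases few₁ : ((steadyParts N μ T₁).card : ℝ) ≤ 4096 * μ
  · exact .inl ⟨T₁, le_add_right le_self_add, card_T₁, few₁,
      countP_le_of_forall fun s hs => not_not.2 (steady₁ s hs)⟩
  by_cases few₂ : ((steadyParts N μ T₂).card : ℝ) ≤ 4096 * μ
  · exact .inl ⟨T₂, le_add_right le_add_self, card_T₂, few₂,
      countP_le_of_forall fun s hs => not_not.2 (steady₂ s hs)⟩
  refine .inr (or_iff_not_imp_right.2 fun not_small => ?_)
  have n_lt : n < W.sum := not_le.1 fun le => not_small <|
    (countP_le _).trans <| add_le_add_right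
      (countP_notMem_Icc_le (fun s hs => (W_Icc s hs).1) le hμ) _
  obtain ⟨g, dvd, g_ne⟩ : ∃ g, (∀ s ∈ W, g ∣ s) ∧ g ≠ 1 := by
    by_contra! coprime
    exact n_lt.not_ge (h.sum_le_of_subset_steadyParts hd hP steady₁ steady₂
      (not_le.1 few₁).le (not_le.1 few₂).le coprime)
  obtain ⟨s, hs⟩ : ∃ s, s ∈ W := Multiset.exists_mem_of_ne_zero fun W_eq => by
    rw [W_eq] at n_lt
    exact absurd n_lt (Nat.not_lt_zero n)
  have g_pos := Nat.pos_of_dvd_of_pos (dvd s hs) (W_Icc s hs).1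
  have g_le : g ≤ N := (Nat.le_of_dvd (W_Icc s hs).1 (dvd s hs)).trans (W_Icc s hs).2
  exact ⟨g, Finset.mem_Icc.2 ⟨by omega, g_le⟩,
    countP_le_of_forall fun s hs => not_not.2 (dvd s hs)⟩

end Saturation

section BoundedMultisets

/-- The multisets of at most `m` elements of `Λ`. -/
noncomputable def boundedMultisets {α : Type*} [DecidableEq α] (Λ : Finset α) (m : ℕ) :
    Finset (Multiset α) :=
  (Finset.range (m + 1)).biUnion fun j => (Λ.finsuppAntidiag j).image Finsupp.toMultiset

variable {α : Type*} [DecidableEq α] {Λ : Finset α} {m : ℕ}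

lemma mem_boundedMultisets {T : Multiset α} :
    T ∈ boundedMultisets Λ m ↔ (∀ x ∈ T, x ∈ Λ) ∧ T.card ≤ m := by
  simp only [boundedMultisets, Finset.mem_biUnion, Finset.mem_range, Finset.mem_image,
    Finset.mem_finsuppAntidiag', Nat.lt_succ_iff]
  constructor
  · rintro ⟨j, j_le, f, ⟨sum_eq, support_subset⟩, rfl⟩
    refine ⟨fun x hx => support_subset ((Finsupp.mem_toMultiset f x).1 hx), ?_⟩
    exact (Finsupp.card_toMultiset f).trans_le (sum_eq.trans_le j_le)
  · rintro ⟨mem, card_le⟩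
    refine ⟨T.card, card_le, T.toFinsupp, ⟨?_, fun x hx => mem x ?_⟩, T.toFinsupp_toMultiset⟩
    · exact T.toFinsupp_sum_eq
    · rwa [Multiset.toFinsupp_support, Multiset.mem_toFinset] at hx

lemma card_boundedMultisets_le (Λ : Finset α) (m : ℕ) :
    (boundedMultisets Λ m).card ≤ (Λ.card + m).choose m := by
  refine Finset.card_biUnion_le.trans ((Finset.sum_le_sum fun j _ => Finset.card_image_le).trans ?_)
  simp only [Finset.card_finsuppAntidiag_nat_eq_multichoose]
  rw [Nat.sum_range_multichoose, add_comm, Nat.choose_symm_add]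

end BoundedMultisets

section Carriers

/-- The quotients by `d` of the multiples of `d` in `V`. -/
def quotientParts (d : ℕ) (V : Multiset ℕ) : Multiset ℕ := (V.filter (d ∣ ·)).map (· / d)

variable {n d : ℕ} {V : Multiset ℕ}

lemma map_mul_quotientParts (d : ℕ) (V : Multiset ℕ) :
    (quotientParts d V).map (d * ·) = V.filter (d ∣ ·) := by
  rw [quotientParts, Multiset.map_map]
  refine (Multiset.map_congr rfl fun x hx => ?_).trans (Multiset.map_id _)
  exact Nat.mul_div_cancel' (Multiset.mem_filter.1 hx).2

lemma map_mul_quotientParts_le (d : ℕ) (V : Multiset ℕ) :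
    (quotientParts d V).map (d * ·) ≤ V :=
  map_mul_quotientParts d V ▸ Multiset.filter_le _ V

lemma quotientParts_map_mul (hd : 0 < d) (T : Multiset ℕ) :
    quotientParts d (T.map (d * ·)) = T := by
  refine Multiset.map_injective (mul_right_injective₀ hd.ne') ?_
  rw [map_mul_quotientParts, Multiset.filter_eq_self]
  exact Multiset.forall_mem_map_iff.2 fun x _ => dvd_mul_right d x

lemma mem_Icc_of_mem_quotientParts (hd : 0 < d) (hV : ∀ x ∈ V, x ∈ Finset.Icc 1 n) {x : ℕ}
    (hx : x ∈ quotientParts d V) : x ∈ Finset.Icc 1 (n / d) := by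
  have := Finset.mem_Icc.1 (hV _ (Multiset.mem_of_le (map_mul_quotientParts_le d V)
    (Multiset.mem_map_of_mem (d * ·) hx)))
  rw [Finset.mem_Icc, Nat.le_div_iff_mul_le hd, mul_comm x d]
  exact ⟨Nat.pos_of_mul_pos_left this.1, this.2⟩

lemma countP_le_countP_not_dvd_add (d : ℕ) (V : Multiset ℕ) (p : ℕ → Prop) [DecidablePred p] :
    V.countP p ≤ V.countP (¬ d ∣ ·) + (quotientParts d V).countP fun x => p (d * x) := by
  have dvd : (V.filter (d ∣ ·)).countP p = (quotientParts d V).countP fun x => p (d * x) := by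
    rw [← map_mul_quotientParts, Multiset.countP_map, Multiset.countP_eq_card_filter]
  rw [Multiset.countP_eq_countP_filter_add V p (d ∣ ·), dvd, add_comm,
    Multiset.countP_eq_card_filter (fun x => ¬ d ∣ x)]
  exact Nat.add_le_add_right (Multiset.countP_le_card _ _) _

/-- A bound for the number of parts outside a suitable carrier. -/
noncomputable def exceptionBound (n : ℕ) (μ : ℝ) : ℝ :=
  2 * (8193 * Real.log (8 * n)) * (Nat.log 2 n + 1) + 65 * n / μ

/-- The number of parts that are allowed not to be multiples of `d`. Passing from `d` to a proper
multiple increases it by at least `2 * potentialBound (n / d) μ`. -/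
noncomputable def divisorAllowance (n : ℕ) (μ : ℝ) (d : ℕ) : ℝ :=
  2 * (8193 * Real.log (8 * n)) * Nat.log 2 d + 64 * n / μ * (1 - 1 / d)

lemma two_mul_potentialBound_le {μ : ℝ} (hμ : 0 < μ) (hd : d ∈ Finset.Icc 1 n) :
    2 * potentialBound (n / d) μ ≤
      2 * (8193 * Real.log (8 * n)) + 32 * n / μ * (1 / d) := by
  obtain ⟨one_le_d, d_le⟩ := Finset.mem_Icc.1 hd
  have : (0 : ℝ) < d := by exact_mod_cast one_le_d
  have one_le : (1 : ℝ) ≤ (n / d : ℕ) := by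
    exact_mod_cast (Nat.one_le_div_iff one_le_d).2 d_le
  have le_div : ((n / d : ℕ) : ℝ) ≤ n / d := Nat.cast_div_le
  have le_n : ((n / d : ℕ) : ℝ) ≤ n := by exact_mod_cast Nat.div_le_self n d
  have log_le : Real.log (4 * ((n / d : ℕ) + 1)) ≤ Real.log (8 * n) :=
    Real.log_le_log (by positivity) (by linarith)
  have div_le : 8 * (((n / d : ℕ) : ℝ) + 1) / μ ≤ 16 * n / μ * (1 / d) :=
    calc 8 * (((n / d : ℕ) : ℝ) + 1) / μ ≤ 16 * (n / d) / μ :=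
          div_le_div_of_nonneg_right (by linarith) hμ.le
      _ = 16 * n / μ * (1 / d) := by ring
  calc 2 * potentialBound (n / d) μ
      ≤ 2 * (8193 * Real.log (8 * n) + 16 * n / μ * (1 / d)) := by
        rw [potentialBound]
        linarith
    _ = _ := by ring

lemma divisorAllowance_add_le {μ : ℝ} (hμ : 0 < μ) (hd : d ∈ Finset.Icc 1 n) {g : ℕ} (hg : 2 ≤ g) :
    divisorAllowance n μ d + 2 * potentialBound (n / d) μ ≤ divisorAllowance n μ (d * g) := by
  obtain ⟨one_le_d, d_le⟩ := Finset.mem_Icc.1 hd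
  have log_add_one_le : (Nat.log 2 d : ℝ) + 1 ≤ Nat.log 2 (d * g) := by
    rw [← Nat.cast_add_one, ← Nat.log_mul_base one_lt_two (by omega)]
    exact_mod_cast Nat.log_mono_right (Nat.mul_le_mul_left d hg)
  have log_nonneg : 0 ≤ Real.log (8 * n) := by
    apply Real.log_nonneg
    have : (1 : ℝ) ≤ n := by exact_mod_cast one_le_d.trans d_le
    linarith
  have half : 1 / ((d * g : ℕ) : ℝ) ≤ 1 / d / 2 := by
    rw [div_div]
    have : (0 : ℝ) < d := by exact_mod_cast one_le_d
    push_cast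
    gcongr
    exact_mod_cast hg
  calc divisorAllowance n μ d + 2 * potentialBound (n / d) μ
      ≤ 2 * (8193 * Real.log (8 * n)) * (Nat.log 2 d + 1) + 64 * n / μ * (1 - 1 / d / 2) := by
        refine (add_le_add_right (two_mul_potentialBound_le hμ hd) _).trans_eq ?_
        rw [divisorAllowance]
        ring
    _ ≤ divisorAllowance n μ (d * g) := by
        rw [divisorAllowance]
        gcongr

lemma divisorAllowance_add_le_exceptionBound {μ : ℝ} (hμ : 0 < μ) (hd : d ∈ Finset.Icc 1 n) :
    divisorAllowance n μ d + (2 * potentialBound (n / d) μ + n / (4096 * μ)) ≤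
      exceptionBound n μ := by
  obtain ⟨one_le_d, d_le⟩ := Finset.mem_Icc.1 hd
  have log_le : (Nat.log 2 d : ℝ) ≤ Nat.log 2 n := by exact_mod_cast Nat.log_mono_right d_le
  have log_nonneg : 0 ≤ Real.log (8 * n) := by
    apply Real.log_nonneg
    have : (1 : ℝ) ≤ n := by exact_mod_cast one_le_d.trans d_le
    linarith
  have div_nonneg : 0 ≤ n / μ * (1 / d) := by positivity
  have div_nonneg' : 0 ≤ n / μ := by positivity
  calc divisorAllowance n μ d + (2 * potentialBound (n / d) μ + n / (4096 * μ))
      ≤ divisorAllowance n μ d +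
          (2 * (8193 * Real.log (8 * n)) + 32 * n / μ * (1 / d) + n / (4096 * μ)) := by
        gcongr
        exact two_mul_potentialBound_le hμ hd
    _ = 2 * (8193 * Real.log (8 * n)) * (Nat.log 2 d + 1) + 65 * n / μ -
          (32 * (n / μ * (1 / d)) + 4095 / 4096 * (n / μ)) := by
        rw [divisorAllowance]
        ring
    _ ≤ 2 * (8193 * Real.log (8 * n)) * (Nat.log 2 d + 1) + 65 * n / μ := by linarith
    _ ≤ exceptionBound n μ := by
        rw [exceptionBound]
        gcongr

end Carriers

section Structure

/-- Candidates for a set of at most `4096 * μ` parts carrying all but few parts of a primitive pair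
over `Λ`. Apart from an initial segment of the multiples of `d`, such a set is determined by at most
`m` parts. -/
noncomputable def carriers (n : ℕ) (μ : ℝ) (Λ : Finset ℕ) (m : ℕ) : Finset (Finset ℕ) :=
  {S ∈ ((Finset.Icc 1 n).image fun d => (Finset.Icc 1 ⌊4096 * μ⌋₊).image (d * ·)) ∪
      Finset.image₂ (fun d T => (steadyParts (n / d) μ (quotientParts d T)).image (d * ·))
        (Finset.Icc 1 n) (boundedMultisets Λ m) | (S.card : ℝ) ≤ 4096 * μ}

variable {n : ℕ} {μ : ℝ} {P Q V : Multiset ℕ} {Λ : Finset ℕ} {m : ℕ}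

lemma card_le_of_mem_carriers {S : Finset ℕ} (hS : S ∈ carriers n μ Λ m) :
    (S.card : ℝ) ≤ 4096 * μ :=
  (Finset.mem_filter.1 hS).2

lemma card_carriers_le (n : ℕ) (μ : ℝ) (Λ : Finset ℕ) (m : ℕ) :
    (carriers n μ Λ m).card ≤ 2 * n * (boundedMultisets Λ m).card := by
  have pos : 1 ≤ (boundedMultisets Λ m).card :=
    Finset.card_pos.2 ⟨0, mem_boundedMultisets.2 ⟨by simp, by simp⟩⟩
  calc (carriers n μ Λ m).card
      ≤ (Finset.Icc 1 n).card + (Finset.Icc 1 n).card * (boundedMultisets Λ m).card :=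
        (Finset.card_filter_le _ _).trans <| (Finset.card_union_le _ _).trans <|
          add_le_add Finset.card_image_le (Finset.card_image₂_le _ _ _)
    _ ≤ 2 * n * (boundedMultisets Λ m).card := by
        rw [Nat.card_Icc, Nat.add_sub_cancel]
        nlinarith

lemma image_Icc_mem_carriers (hμ : 0 < μ) {d : ℕ} (hd : d ∈ Finset.Icc 1 n) :
    (Finset.Icc 1 ⌊4096 * μ⌋₊).image (d * ·) ∈ carriers n μ Λ m := by
  refine Finset.mem_filter.2
    ⟨Finset.mem_union_left _ (Finset.mem_image.2 ⟨d, hd, rfl⟩), ?_⟩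
  refine le_trans ?_ (Nat.floor_le (show 0 ≤ 4096 * μ by positivity))
  exact_mod_cast Finset.card_image_le.trans (Nat.card_Icc 1 _).le

lemma image_steadyParts_mem_carriers {d : ℕ} (hd : d ∈ Finset.Icc 1 n) {T : Multiset ℕ}
    (hT : T.map (d * ·) ∈ boundedMultisets Λ m)
    (few : ((steadyParts (n / d) μ T).card : ℝ) ≤ 4096 * μ) :
    (steadyParts (n / d) μ T).image (d * ·) ∈ carriers n μ Λ m := by
  refine Finset.mem_filter.2 ⟨Finset.mem_union_right _ ?_, ?_⟩
  · refine Finset.mem_image₂.2 ⟨d, hd, _, hT, ?_⟩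
    rw [quotientParts_map_mul (Finset.mem_Icc.1 hd).1]
  · exact le_trans (by exact_mod_cast Finset.card_image_le) few

lemma countP_notMem_image_mul_le {d : ℕ} (hd : 0 < d) (V : Multiset ℕ) (S : Finset ℕ) :
    V.countP (· ∉ S.image (d * ·)) ≤
      V.countP (¬ d ∣ ·) + (quotientParts d V).countP (· ∉ S) := by
  have := countP_le_countP_not_dvd_add d V (· ∉ S.image (d * ·))
  simpa only [(mul_right_injective₀ hd.ne').mem_finset_image] using this

lemma exists_maximal_divisor (hn : 1 ≤ n) (μ : ℝ) (V : Multiset ℕ) :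
    ∃ d ∈ Finset.Icc 1 n, (V.countP (¬ d ∣ ·) : ℝ) ≤ divisorAllowance n μ d ∧
      ∀ g, 2 ≤ g → d * g ≤ n → divisorAllowance n μ (d * g) < V.countP (¬ d * g ∣ ·) := by
  obtain ⟨d, hd, d_max⟩ := Finset.exists_max_image
    {d ∈ Finset.Icc 1 n | (V.countP (¬ d ∣ ·) : ℝ) ≤ divisorAllowance n μ d} id
    ⟨1, Finset.mem_filter.2 ⟨Finset.mem_Icc.2 ⟨le_rfl, hn⟩, by simp [divisorAllowance]⟩⟩
  obtain ⟨hd, count_le⟩ := Finset.mem_filter.1 hd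
  refine ⟨d, hd, count_le, fun g hg mul_le => not_le.1 fun le => ?_⟩
  have one_le := (Finset.mem_Icc.1 hd).1
  have lt_mul : d < d * g := lt_mul_of_one_lt_right one_le hg
  exact lt_mul.not_ge (d_max _ (Finset.mem_filter.2
    ⟨Finset.mem_Icc.2 ⟨one_le.trans lt_mul.le, mul_le⟩, le⟩))

lemma IsPrimitivePair.exists_mem_carriers (h : IsPrimitivePair n P Q) (hn : 1 ≤ n) (hμ : 0 < μ)
    (hV : V ≤ P) (hΛ : ∀ x ∈ V, x ∈ Λ) :
    ∃ S ∈ carriers n μ Λ ⌊exceptionBound n μ⌋₊,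
      V.countP (· ∉ S) ≤ ⌊exceptionBound n μ⌋₊ := by
  obtain ⟨d, hd, count_le, d_max⟩ := exists_maximal_divisor hn μ V
  have one_le : 1 ≤ d := (Finset.mem_Icc.1 hd).1
  have V_Icc (x) (hx : x ∈ V) := h.mem_left x (Multiset.mem_of_le hV hx)
  have allowance_le := divisorAllowance_add_le_exceptionBound hμ hd
  have extra_nonneg : 0 ≤ n / (4096 * μ) := by positivity
  have exceptions_le {S : Finset ℕ} (hS : ((quotientParts d V).countP (· ∉ S) : ℝ) ≤
      2 * potentialBound (n / d) μ + n / (4096 * μ)) :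
      V.countP (· ∉ S.image (d * ·)) ≤ ⌊exceptionBound n μ⌋₊ := by
    refine Nat.le_floor (le_trans ?_ allowance_le)
    have : (V.countP (· ∉ S.image (d * ·)) : ℝ) ≤ _ :=
      Nat.cast_le.2 (countP_notMem_image_mul_le one_le V S)
    rw [Nat.cast_add] at this
    linarith
  rcases h.exists_steadyParts_or_dvd_or_small one_le hμ
    (fun x hx => mem_Icc_of_mem_quotientParts one_le V_Icc hx)
    ((map_mul_quotientParts_le d V).trans hV) with
    ⟨T, T_le, card_le, few, rest_le⟩ | ⟨g, hg, rest_le⟩ | rest_le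
  · refine ⟨_, image_steadyParts_mem_carriers hd (mem_boundedMultisets.2 ⟨?_, ?_⟩) few,
      exceptions_le (by linarith)⟩
    · exact fun x hx => hΛ x (Multiset.mem_of_le
        ((Multiset.map_le_map T_le).trans (map_mul_quotientParts_le d V)) hx)
    · rw [Multiset.card_map]
      have := (Nat.cast_nonneg _).trans count_le
      have := (Nat.cast_nonneg _).trans card_le
      exact Nat.le_floor (by linarith)
  · obtain ⟨two_le, g_le⟩ := Finset.mem_Icc.1 hg
    have lt := d_max g two_le ((Nat.mul_comm d g).trans_le ((Nat.le_div_iff_mul_le one_le).1 g_le))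
    have le := countP_le_countP_not_dvd_add d V (¬ d * g ∣ ·)
    simp only [Nat.mul_dvd_mul_iff_left one_le] at le
    have le' : (V.countP (¬ d * g ∣ ·) : ℝ) ≤ _ := Nat.cast_le.2 le
    rw [Nat.cast_add] at le'
    linarith [divisorAllowance_add_le hμ hd two_le]
  · exact ⟨_, image_Icc_mem_carriers hμ hd, exceptions_le rest_le⟩

open Classical in
/-- The multisets over `Λ` occurring in one side of a primitive pair. -/
noncomputable def subParts (n : ℕ) (Λ : Finset ℕ) : Finset (Multiset ℕ) :=
  {V ∈ Finset.Iic (n • Λ.val) | ∃ P Q, IsPrimitivePair n P Q ∧ V ≤ P}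

lemma mem_subParts :
    V ∈ subParts n Λ ↔ (∀ x ∈ V, x ∈ Λ) ∧ ∃ P Q, IsPrimitivePair n P Q ∧ V ≤ P := by
  classical
  rw [subParts, Finset.mem_filter, Finset.mem_Iic, and_congr_left_iff]
  rintro ⟨P, Q, h, hVP⟩
  constructor
  · exact fun le x hx => Multiset.mem_of_mem_nsmul (Multiset.mem_of_le le hx)
  · refine fun hΛ => Multiset.le_iff_count.2 fun x => ?_
    by_cases hx : x ∈ V
    · rw [Multiset.count_nsmul, Multiset.count_eq_one_of_mem Λ.nodup (hΛ x hx), mul_one]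
      exact (Multiset.count_le_of_le x hVP).trans (h.count_le x)
    · rw [Multiset.count_eq_zero_of_notMem hx]
      exact Nat.zero_le _

lemma card_subParts_le (n : ℕ) (Λ : Finset ℕ) : (subParts n Λ).card ≤ (n + 1) ^ Λ.card := by
  classical
  calc (subParts n Λ).card ≤ (Finset.Iic (n • Λ.val)).card := Finset.card_filter_le _ _
    _ = ∏ x ∈ (n • Λ.val).toFinset, ((n • Λ.val).count x + 1) := Multiset.card_Iic _
    _ ≤ ∏ x ∈ (n • Λ.val).toFinset, (n + 1) := Finset.prod_le_prod' fun x _ => by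
        rw [Multiset.count_nsmul]
        gcongr
        exact mul_le_of_le_one_right (Nat.zero_le n) (Multiset.nodup_iff_count_le_one.1 Λ.nodup x)
    _ = (n + 1) ^ (n • Λ.val).toFinset.card := Finset.prod_const _
    _ ≤ (n + 1) ^ Λ.card := by
        refine Nat.pow_le_pow_right n.succ_pos (Finset.card_le_card fun x hx => ?_)
        exact Multiset.mem_of_mem_nsmul (Multiset.mem_toFinset.1 hx)

/-- A member of `subParts n Λ` consists of few exceptional parts and of a member of
`subParts n S` for a carrier `S`. -/
lemma card_subParts_le_mul (hn : 1 ≤ n) (hμ : 0 < μ) (Λ : Finset ℕ) {c : ℕ}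
    (hc : ∀ S : Finset ℕ, (S.card : ℝ) ≤ 4096 * μ → (subParts n S).card ≤ c) :
    (subParts n Λ).card ≤
      2 * n * (boundedMultisets Λ ⌊exceptionBound n μ⌋₊).card ^ 2 * c := by
  set m := ⌊exceptionBound n μ⌋₊
  have covered : subParts n Λ ⊆ (carriers n μ Λ m).biUnion fun S =>
      Finset.image₂ (· + ·) (boundedMultisets Λ m) (subParts n S) := by
    intro V hV
    obtain ⟨hΛ, P, Q, h, hVP⟩ := mem_subParts.1 hV
    obtain ⟨S, hS, count_le⟩ := h.exists_mem_carriers hn hμ hVP hΛ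
    rw [Multiset.countP_eq_card_filter] at count_le
    refine Finset.mem_biUnion.2 ⟨S, hS, Finset.mem_image₂.2 ⟨_, mem_boundedMultisets.2
      ⟨fun x hx => hΛ x (Multiset.mem_of_mem_filter hx), count_le⟩, V.filter (· ∈ S),
      mem_subParts.2 ⟨fun x hx => Multiset.of_mem_filter hx, P, Q, h,
        (Multiset.filter_le _ V).trans hVP⟩, ?_⟩⟩
    rw [add_comm]
    exact Multiset.filter_add_not _ V
  calc (subParts n Λ).card
      ≤ (carriers n μ Λ m).card * ((boundedMultisets Λ m).card * c) := by
        refine (Finset.card_le_card covered).trans (Finset.card_biUnion_le_card_mul _ _ _ ?_)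
        exact fun S hS => (Finset.card_image₂_le _ _ _).trans
          (Nat.mul_le_mul_left _ (hc S (card_le_of_mem_carriers hS)))
    _ ≤ 2 * n * (boundedMultisets Λ m).card * ((boundedMultisets Λ m).card * c) := by
        gcongr
        exact card_carriers_le n μ Λ m
    _ = _ := by ring

end Structure

section Counting

variable {n m : ℕ}

lemma eventually_exceptionBound_le :
    ∀ᶠ n : ℕ in Filter.atTop, ∀ a > 0, exceptionBound n (a * √n) ≤ (1 / 2 + 65 / a) * √n := by
  have sqrt_tendsto := Real.tendsto_sqrt_atTop.comp tendsto_natCast_atTop_atTop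
  filter_upwards [Filter.eventually_ge_atTop 8, sqrt_tendsto.eventually
    ((Real.isLittleO_pow_log_id_atTop (n := 2)).bound (show (0 : ℝ) < 1 / 800000 by norm_num))]
    with n hn log_sq_le a _
  have eight_le : (8 : ℝ) ≤ n := by exact_mod_cast hn
  have one_le_log : 1 ≤ Real.log n := by
    rw [Real.le_log_iff_exp_le (by linarith)]
    linarith [Real.exp_one_lt_d9]
  have log_mul_le : Real.log (8 * n) ≤ 2 * Real.log n := by
    rw [Real.log_mul (by norm_num) (by linarith)]
    linarith [Real.log_le_log (by norm_num) eight_le]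
  have natLog_le : (Nat.log 2 n : ℝ) ≤ 2 * Real.log n := by
    have : Nat.log 2 n * Real.log 2 ≤ Real.log n := by
      rw [← Real.log_pow]
      exact Real.log_le_log (by positivity) (by exact_mod_cast Nat.pow_log_le_self 2 (by omega))
    nlinarith [Real.log_two_gt_d9, (Nat.log 2 n).cast_nonneg (α := ℝ)]
  have log_eq : Real.log √n = Real.log n / 2 := Real.log_sqrt n.cast_nonneg
  simp only [Function.comp_apply, Real.norm_eq_abs, id, log_eq, abs_sq,
    abs_of_nonneg (Real.sqrt_nonneg _)] at log_sq_le
  have div_eq : 65 * n / (a * √n) = 65 / a * √n := by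
    rw [mul_div_mul_comm, Real.div_sqrt]
  calc exceptionBound n (a * √n)
      ≤ 2 * (8193 * (2 * Real.log n)) * (2 * Real.log n + Real.log n) + 65 / a * √n := by
        rw [exceptionBound, div_eq]
        gcongr
    _ ≤ (1 / 2 + 65 / a) * √n := by nlinarith

lemma card_boundedMultisets_le_exp (Λ : Finset ℕ) (m : ℕ) :
    ((boundedMultisets Λ m).card : ℝ) ≤ Real.exp ((Λ.card + m) * Real.log 2) := by
  have : (boundedMultisets Λ m).card ≤ 2 ^ (Λ.card + m) :=
    (card_boundedMultisets_le Λ m).trans (Nat.choose_le_two_pow _ _)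
  rw [← Nat.cast_add, Real.exp_nat_mul, Real.exp_log two_pos]
  exact_mod_cast this

lemma card_boundedMultisets_Icc_le_exp (hn : 1 ≤ n) (hm : m ≤ n) :
    ((boundedMultisets (Finset.Icc 1 n) m).card : ℝ) ≤ Real.exp (m * Real.log (2 * n)) := by
  have : (boundedMultisets (Finset.Icc 1 n) m).card ≤ (2 * n) ^ m := by
    calc (boundedMultisets (Finset.Icc 1 n) m).card
        ≤ (n + m).choose m := by simpa using card_boundedMultisets_le (Finset.Icc 1 n) m
      _ ≤ (n + m) ^ m := Nat.choose_le_pow _ _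
      _ ≤ (2 * n) ^ m := Nat.pow_le_pow_left (by omega) m
  rw [Real.exp_nat_mul, Real.exp_log (mul_pos two_pos (Nat.cast_pos.2 hn))]
  exact_mod_cast this

lemma card_subParts_le_exp_of_card_le (hn : 1 ≤ n) {r : ℝ} {Λ : Finset ℕ} (hΛ : Λ.card ≤ r) :
    ((subParts n Λ).card : ℝ) ≤ Real.exp (r * Real.log (2 * n)) := by
  have one_le : (1 : ℝ) ≤ n := by exact_mod_cast hn
  have log_nonneg : 0 ≤ Real.log (2 * n) := Real.log_nonneg (by linarith)
  calc ((subParts n Λ).card : ℝ) ≤ (n + 1) ^ Λ.card := by exact_mod_cast card_subParts_le n Λ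
    _ ≤ (2 * n) ^ Λ.card := by gcongr; linarith
    _ = Real.exp (Λ.card * Real.log (2 * n)) := by
        rw [Real.exp_nat_mul, Real.exp_log (by positivity)]
    _ ≤ Real.exp (r * Real.log (2 * n)) := by gcongr

lemma card_subParts_le_exp_add {μ a b : ℝ} {Λ : Finset ℕ} (hn : 1 ≤ n) (hμ : 0 < μ)
    (ha : ((boundedMultisets Λ ⌊exceptionBound n μ⌋₊).card : ℝ) ≤ Real.exp a)
    (hb : ∀ S : Finset ℕ, (S.card : ℝ) ≤ 4096 * μ → ((subParts n S).card : ℝ) ≤ Real.exp b) :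
    ((subParts n Λ).card : ℝ) ≤ Real.exp (Real.log (2 * n) + 2 * a + b) := by
  have card_le := card_subParts_le_mul hn hμ Λ fun S hS => Nat.le_floor (hb S hS)
  calc ((subParts n Λ).card : ℝ)
      ≤ 2 * n * (boundedMultisets Λ ⌊exceptionBound n μ⌋₊).card ^ 2 * ⌊Real.exp b⌋₊ := by
        exact_mod_cast card_le
    _ ≤ 2 * n * Real.exp a ^ 2 * Real.exp b := by
        gcongr
        exact Nat.floor_le (Real.exp_pos b).le
    _ = Real.exp (Real.log (2 * n) + 2 * a + b) := by
        rw [Real.exp_add, Real.exp_add, Real.exp_log (mul_pos two_pos (Nat.cast_pos.2 hn)),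
          ← Real.exp_nat_mul, Nat.cast_two]

lemma card_subParts_le_exp_of_card_le_sqrt (hn : 1 ≤ n)
    (hE : ∀ a > 0, exceptionBound n (a * √n) ≤ (1 / 2 + 65 / a) * √n)
    {Λ : Finset ℕ} (hΛ : Λ.card ≤ 532480 * √n) :
    ((subParts n Λ).card : ℝ) ≤
      Real.exp (Real.log (2 * n) + 2 * (1064960 * √n * Real.log 2) + √n * Real.log (2 * n)) := by
  have sqrt_pos : 0 < √(n : ℝ) := Real.sqrt_pos.2 (by exact_mod_cast hn)
  have floor_le : (⌊exceptionBound n (1 / 4096 * √n)⌋₊ : ℝ) ≤ 532480 * √n := by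
    refine (Nat.cast_le.2 (Nat.floor_le_floor (hE (1 / 4096) (by norm_num)))).trans ?_
    exact (Nat.floor_le (by positivity)).trans (by linarith)
  refine card_subParts_le_exp_add (μ := 1 / 4096 * √n) hn (by positivity) ?_ fun S hS =>
    card_subParts_le_exp_of_card_le hn (by linarith)
  refine (card_boundedMultisets_le_exp Λ _).trans (Real.exp_le_exp.2 ?_)
  gcongr
  linarith

-- The reduction is applied twice: first to all parts, with carriers of size `O(√n)` and at most
-- `√n` exceptions, then inside such a carrier, where `O(√n)` exceptions cost only `2 ^ O(√n)`.
lemma eventually_card_subParts_Icc_le :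
    ∀ᶠ n : ℕ in Filter.atTop, ((subParts n (Finset.Icc 1 n)).card : ℝ) ≤
      Real.exp (6 * √n * Real.log (2 * n)) := by
  have log_tendsto : Filter.Tendsto (fun n : ℕ => Real.log (2 * n)) Filter.atTop Filter.atTop :=
    Real.tendsto_log_atTop.comp (tendsto_natCast_atTop_atTop.const_mul_atTop two_pos)
  filter_upwards [eventually_exceptionBound_le, Filter.eventually_ge_atTop 4,
    log_tendsto.eventually_ge_atTop 1064960] with n hE hn log_ge
  have two_le_sqrt : 2 ≤ √(n : ℝ) := by
    rw [Real.le_sqrt two_pos.le (Nat.cast_nonneg n)]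
    exact_mod_cast hn
  have floor_le : (⌊exceptionBound n (130 * √n)⌋₊ : ℝ) ≤ √n := by
    refine (Nat.cast_le.2 (Nat.floor_le_floor (hE 130 (by norm_num)))).trans ?_
    exact (Nat.floor_le (by positivity)).trans (by linarith)
  have floor_le_n : ⌊exceptionBound n (130 * √n)⌋₊ ≤ n := by
    refine Nat.cast_le.1 (floor_le.trans ((Real.sqrt_le_left (Nat.cast_nonneg n)).2 ?_))
    exact_mod_cast Nat.le_self_pow two_ne_zero n
  refine (card_subParts_le_exp_add (μ := 130 * √n) (by omega) (by positivity)
    ((card_boundedMultisets_Icc_le_exp (by omega) floor_le_n).trans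
      (Real.exp_le_exp.2 (mul_le_mul_of_nonneg_right floor_le (by linarith))))
    fun S hS => card_subParts_le_exp_of_card_le_sqrt (by omega) hE (by linarith)).trans
    (Real.exp_le_exp.2 ?_)
  have log_two_le : Real.log 2 ≤ 1 := by linarith [Real.log_two_lt_d9]
  have log_term : 2 * Real.log (2 * n) ≤ √n * Real.log (2 * n) := by gcongr
  have exceptions_term : 1064960 * √n * Real.log 2 ≤ √n * Real.log (2 * n) := by
    rw [mul_right_comm, mul_comm]
    gcongr
    linarith
  linarith

end Counting

section Invariants

variable {k}
variable {ι : Type} {w : ι → ℤ} {s : Multiset ι}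

lemma exists_zpow_ne_one [Infinite k] {a : ℤ} (ha : a ≠ 0) : ∃ t : kˣ, t ^ a ≠ 1 := by
  by_contra! pow_eq
  have natAbs_pos := Int.natAbs_pos.2 ha
  refine FiniteField.X_pow_card_sub_X_ne_zero k (Nat.lt_add_of_pos_left natAbs_pos)
    (Polynomial.zero_of_eval_zero _ fun x => ?_)
  rw [Polynomial.eval_sub, Polynomial.eval_pow, Polynomial.eval_X, sub_eq_zero]
  rcases eq_or_ne x 0 with rfl | hx
  · exact zero_pow (Nat.succ_ne_zero _)
  · have : Units.mk0 x hx ^ a.natAbs = 1 := pow_natAbs_eq_one.2 (pow_eq _)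
    rw [pow_succ, ← Units.val_mk0 hx, ← Units.val_pow_eq_pow_val, this, Units.val_one, one_mul]

lemma torusAct_prod_X (w : ι → ℤ) (t : kˣ) (s : Multiset ι) :
    torusAct k w t (s.map X).prod = ((t ^ (s.map w).sum : kˣ) : k) • (s.map X).prod := by
  induction s using Multiset.induction with
  | empty => simp
  | cons i s ih =>
    rw [Multiset.map_cons, Multiset.map_cons, Multiset.prod_cons, Multiset.sum_cons, map_mul, ih,
      torusAct, aeval_X, smul_mul_smul_comm, zpow_add, Units.val_mul]

lemma monomial_eq_smul_prod_X (m : ι →₀ ℕ) (a : k) :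
    monomial m a = a • (m.toMultiset.map X).prod := by
  rw [monomial_eq, Finsupp.toMultiset_map, Finsupp.prod_toMultiset, smul_eq_C_mul,
    Finsupp.prod_mapDomain_index (fun _ => pow_zero _) (fun _ _ _ => pow_add _ _ _)]

lemma coeff_torusAct (w : ι → ℤ) (t : kˣ) (p : MvPolynomial ι k) (m : ι →₀ ℕ) :
    coeff m (torusAct k w t p) = ((t ^ (m.toMultiset.map w).sum : kˣ) : k) * coeff m p := by
  classical
  induction p using MvPolynomial.induction_on' with
  | monomial u a =>
    rw [monomial_eq_smul_prod_X, map_smul, torusAct_prod_X, smul_comm, ← monomial_eq_smul_prod_X,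
      coeff_smul, smul_eq_mul, coeff_monomial]
    split_ifs with h
    · rw [h]
    · rw [mul_zero, mul_zero]
  | add p q hp hq => rw [map_add, coeff_add, hp, hq, coeff_add, mul_add]

lemma prod_X_mem_torusInv (hs : (s.map w).sum = 0) :
    ((s.map X).prod : MvPolynomial ι k) ∈ torusInv k w := fun t => by
  rw [torusAct_prod_X, hs, zpow_zero, Units.val_one, one_smul]

lemma sum_map_eq_zero_of_mem_support [Infinite k] {p : MvPolynomial ι k} (hp : p ∈ torusInv k w)
    {m : ι →₀ ℕ} (hm : m ∈ p.support) : (m.toMultiset.map w).sum = 0 := by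
  by_contra sum_ne
  obtain ⟨t, ht⟩ := exists_zpow_ne_one (k := k) sum_ne
  refine ht (Units.ext ((mul_eq_right₀ (mem_support_iff.1 hm)).1 ?_))
  rw [← coeff_torusAct, hp t]

/-- A multiset of indices whose weights add up to zero, with no proper nonempty submultiset of this
kind. Multisets of indices stand for monomials. -/
def IsMinimalZeroSum (w : ι → ℤ) (s : Multiset ι) : Prop :=
  Minimal (fun s => s ≠ 0 ∧ (s.map w).sum = 0) s

lemma IsMinimalZeroSum.eq_of_le (h : IsMinimalZeroSum w s) {t : Multiset ι} (ht : t ≤ s)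
    (t_ne : t ≠ 0) (sum_eq : (t.map w).sum = 0) : t = s :=
  ht.antisymm (h.2 ⟨t_ne, sum_eq⟩ ht)

lemma prod_X_mem_of_sum_eq_zero {A : Subalgebra k (MvPolynomial ι k)}
    (hA : ∀ s, IsMinimalZeroSum w s → (s.map X).prod ∈ A) (hs : (s.map w).sum = 0) :
    (s.map X).prod ∈ A := by
  induction s using WellFoundedLT.induction with
  | ind s ih =>
    rcases eq_or_ne s 0 with rfl | s_ne
    · simpa only [Multiset.map_zero, Multiset.prod_zero] using A.one_mem
    obtain ⟨t, t_le, ht⟩ := exists_minimal_le_of_wellFoundedLT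
      (fun s => s ≠ 0 ∧ (s.map w).sum = 0) s ⟨s_ne, hs⟩
    obtain ⟨u, rfl⟩ := Multiset.le_iff_exists_add.1 t_le
    rw [Multiset.map_add, Multiset.sum_add, ht.1.2, zero_add] at hs
    rw [Multiset.map_add, Multiset.prod_add]
    exact A.mul_mem (hA t ht) (ih u (lt_add_of_pos_left u (pos_iff_ne_zero.2 ht.1.1)) hs)

lemma adjoin_minimalZeroSum [Infinite k] (w : ι → ℤ) :
    Algebra.adjoin k ((fun s : Multiset ι => (s.map X).prod) '' {s | IsMinimalZeroSum w s}) =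
      torusInv k w := by
  refine le_antisymm (Algebra.adjoin_le ?_) fun p hp => ?_
  · rintro _ ⟨s, hs, rfl⟩
    exact prod_X_mem_torusInv hs.1.2
  · rw [p.as_sum]
    refine Subalgebra.sum_mem _ fun m hm => ?_
    rw [monomial_eq_smul_prod_X]
    refine Subalgebra.smul_mem _ (prod_X_mem_of_sum_eq_zero (fun s hs => ?_)
      (sum_map_eq_zero_of_mem_support hp hm)) _
    apply Algebra.subset_adjoin
    exact ⟨s, hs, rfl⟩

lemma minGens_torusInv_le_card [Infinite k] {F : Finset (Multiset ι)}
    (hF : ∀ s, IsMinimalZeroSum w s → s ∈ F) : minGens k (torusInv k w) ≤ F.card := by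
  classical
  let G : Finset (MvPolynomial ι k) := {s ∈ F | IsMinimalZeroSum w s}.image fun s => (s.map X).prod
  have adjoin_eq : Algebra.adjoin k (G : Set (MvPolynomial ι k)) = torusInv k w := by
    have coe_eq : (↑({s ∈ F | IsMinimalZeroSum w s} : Finset (Multiset ι)) : Set (Multiset ι)) =
        {s | IsMinimalZeroSum w s} :=
      Set.ext fun s => Finset.mem_filter.trans (and_iff_right_of_imp (hF s))
    rw [Finset.coe_image, coe_eq, adjoin_minimalZeroSum]
  calc minGens k (torusInv k w) ≤ G.card := Nat.sInf_le ⟨G, rfl, adjoin_eq⟩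
    _ ≤ F.card := Finset.card_image_le.trans (Finset.card_filter_le _ _)

end Invariants

section SymmetricWeights

/-- The multiset of indices `i ∈ Fin (2 * n + 1)` with weights `x` for `x ∈ P` and `-y` for
`y ∈ Q`; the index of weight `i` is `n + i`. -/
def signedIndices (n : ℕ) (P Q : Multiset ℕ) : Multiset (Fin (2 * n + 1)) :=
  P.map (fun x => Fin.ofNat _ (n + x)) + Q.map (fun y => Fin.ofNat _ (n - y))

variable {n : ℕ} {P Q : Multiset ℕ}

lemma wSym_ofNat {j : ℕ} (hj : j ≤ 2 * n) : wSym n (Fin.ofNat _ j) = j - n := by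
  rw [wSym, Fin.val_ofNat, Nat.mod_eq_of_lt (Nat.lt_succ_of_le hj)]

lemma sum_map_wSym_signedIndices (hP : ∀ x ∈ P, x ∈ Finset.Icc 1 n)
    (hQ : ∀ x ∈ Q, x ∈ Finset.Icc 1 n) :
    ((signedIndices n P Q).map (wSym n)).sum = P.sum - Q.sum := by
  have pos : P.map (fun x => wSym n (Fin.ofNat _ (n + x))) = P.map ((↑) : ℕ → ℤ) :=
    Multiset.map_congr rfl fun x hx => by
      have := Finset.mem_Icc.1 (hP x hx)
      rw [wSym_ofNat (by omega)]
      omega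
  have neg : Q.map (fun x => wSym n (Fin.ofNat _ (n - x))) = Q.map (fun x : ℕ => -(x : ℤ)) :=
    Multiset.map_congr rfl fun x hx => by
      have := Finset.mem_Icc.1 (hQ x hx)
      rw [wSym_ofNat (by omega)]
      omega
  rw [signedIndices, Multiset.map_add, Multiset.map_map, Multiset.map_map, Multiset.sum_add]
  simp only [Function.comp_apply]
  rw [pos, neg, Multiset.sum_map_neg, Nat.cast_multiset_sum, Nat.cast_multiset_sum, sub_eq_add_neg]

lemma exists_eq_signedIndices (n : ℕ) {s : Multiset (Fin (2 * n + 1))}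
    (hs : Fin.ofNat _ n ∉ s) :
    ∃ P Q, (∀ x ∈ P, x ∈ Finset.Icc 1 n) ∧ (∀ x ∈ Q, x ∈ Finset.Icc 1 n) ∧
      signedIndices n P Q = s := by
  induction s using Multiset.induction with
  | empty => exact ⟨0, 0, by simp, by simp, rfl⟩
  | cons i s ih =>
    obtain ⟨i_ne, hs⟩ := not_or.1 (mt Multiset.mem_cons.2 hs)
    obtain ⟨P, Q, hP, hQ, rfl⟩ := ih hs
    have val_ne : (i : ℕ) ≠ n := fun h => i_ne (by rw [← Fin.ofNat_val_eq_self i, h])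
    rcases val_ne.lt_or_gt with lt | gt
    · refine ⟨P, (n - i) ::ₘ Q, hP, Multiset.forall_mem_cons.2 ⟨?_, hQ⟩, ?_⟩
      · exact Finset.mem_Icc.2 ⟨by omega, by omega⟩
      · rw [signedIndices, Multiset.map_cons, Nat.sub_sub_self lt.le, Fin.ofNat_val_eq_self,
          Multiset.add_cons, signedIndices]
    · refine ⟨(i - n) ::ₘ P, Q, Multiset.forall_mem_cons.2 ⟨?_, hP⟩, hQ, ?_⟩
      · exact Finset.mem_Icc.2 ⟨by omega, by omega⟩
      · rw [signedIndices, Multiset.map_cons, Nat.add_sub_cancel' gt.le, Fin.ofNat_val_eq_self,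
          Multiset.cons_add, signedIndices]

lemma IsMinimalZeroSum.isPrimitivePair (h : IsMinimalZeroSum (wSym n) (signedIndices n P Q))
    (hP : ∀ x ∈ P, x ∈ Finset.Icc 1 n) (hQ : ∀ x ∈ Q, x ∈ Finset.Icc 1 n) :
    IsPrimitivePair n P Q where
  mem_left := hP
  mem_right := hQ
  sum_eq := by
    have := sum_map_wSym_signedIndices hP hQ
    rw [h.1.2] at this
    omega
  eq_of_sum_eq p hp q hq sum_eq := by
    rcases eq_or_ne (signedIndices n p q) 0 with eq_zero | ne_zero
    · left
      simpa only [signedIndices, add_eq_zero, Multiset.map_eq_zero] using eq_zero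
    · right
      have le : signedIndices n p q ≤ signedIndices n P Q :=
        add_le_add (Multiset.map_le_map hp) (Multiset.map_le_map hq)
      have sum_zero : ((signedIndices n p q).map (wSym n)).sum = 0 := by
        rw [sum_map_wSym_signedIndices (fun x hx => hP x (Multiset.mem_of_le hp hx))
          (fun x hx => hQ x (Multiset.mem_of_le hq hx)), sum_eq, sub_self]
      have card_eq := congrArg Multiset.card (h.eq_of_le le ne_zero sum_zero)
      simp only [signedIndices, Multiset.card_add, Multiset.card_map] at card_eq
      have p_le := Multiset.card_le_card hp
      have q_le := Multiset.card_le_card hq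
      exact ⟨Multiset.eq_of_le_of_card_le hp (by omega), Multiset.eq_of_le_of_card_le hq (by omega)⟩

lemma IsMinimalZeroSum.eq_singleton_or_exists {s : Multiset (Fin (2 * n + 1))}
    (h : IsMinimalZeroSum (wSym n) s) :
    s = {Fin.ofNat _ n} ∨ ∃ P Q, IsPrimitivePair n P Q ∧ signedIndices n P Q = s := by
  by_cases hn : Fin.ofNat _ n ∈ s
  · refine .inl (h.eq_of_le (Multiset.singleton_le.2 hn) (Multiset.singleton_ne_zero _) ?_).symm
    rw [Multiset.map_singleton, Multiset.sum_singleton, wSym_ofNat (by omega), sub_self]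
  · obtain ⟨P, Q, hP, hQ, rfl⟩ := exists_eq_signedIndices n hn
    exact .inr ⟨P, Q, h.isPrimitivePair hP hQ, rfl⟩

lemma minGens_torusInv_wSym_le [Infinite k] (n : ℕ) :
    minGens k (torusInv k (wSym n)) ≤ (subParts n (Finset.Icc 1 n)).card ^ 2 + 1 := by
  classical
  let F := insert {Fin.ofNat _ n} (Finset.image₂ (signedIndices n)
    (subParts n (Finset.Icc 1 n)) (subParts n (Finset.Icc 1 n)))
  have mem_F (s) (hs : IsMinimalZeroSum (wSym n) s) : s ∈ F := by
    rcases hs.eq_singleton_or_exists with rfl | ⟨P, Q, h, rfl⟩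
    · exact Finset.mem_insert_self _ _
    · exact Finset.mem_insert_of_mem (Finset.mem_image₂_of_mem
        (mem_subParts.2 ⟨h.mem_left, P, Q, h, le_rfl⟩)
        (mem_subParts.2 ⟨h.mem_right, Q, P, h.symm, le_rfl⟩))
  calc minGens k (torusInv k (wSym n)) ≤ F.card := minGens_torusInv_le_card mem_F
    _ ≤ (subParts n (Finset.Icc 1 n)).card ^ 2 + 1 := by
      rw [sq]
      exact (Finset.card_insert_le _ _).trans
        (Nat.add_le_add_right (Finset.card_image₂_le _ _ _) 1)

end SymmetricWeights

section Bound

lemma subParts_Icc_sq_add_one_isBigO :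
    (fun n : ℕ => ((subParts n (Finset.Icc 1 n)).card : ℝ) ^ 2 + 1) =O[Filter.atTop]
      fun n => n * Real.exp (12 * √n * Real.log (2 * n)) := by
  refine Asymptotics.IsBigO.of_bound 2 ?_
  filter_upwards [eventually_card_subParts_Icc_le, Filter.eventually_ge_atTop 1] with n card_le hn
  have one_le : (1 : ℝ) ≤ n := by exact_mod_cast hn
  have log_nonneg : 0 ≤ Real.log (2 * n) := Real.log_nonneg (by linarith)
  have one_le_exp : 1 ≤ Real.exp (12 * √n * Real.log (2 * n)) := Real.one_le_exp (by positivity)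
  rw [Real.norm_of_nonneg (by positivity), Real.norm_of_nonneg (by positivity)]
  calc ((subParts n (Finset.Icc 1 n)).card : ℝ) ^ 2 + 1
      ≤ Real.exp (6 * √n * Real.log (2 * n)) ^ 2 + 1 := by gcongr
    _ = Real.exp (12 * √n * Real.log (2 * n)) + 1 := by
        rw [← Real.exp_nat_mul, Nat.cast_two, ← mul_assoc, ← mul_assoc]
        norm_num
    _ ≤ 2 * (n * Real.exp (12 * √n * Real.log (2 * n))) := by nlinarith

end Bound

end TorusInvariants

open TorusInvariants in
theorem symmetric_torus_invariants_minGens_bound_general :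
    ∃ C : ℝ, ∀ (K : Type) [Field K] [Infinite K] (n : ℕ), 1 ≤ n →
      (minGens K (torusInv K (wSym n)) : ℝ) ≤
        C * n * Real.exp (12 * Real.sqrt n * Real.log (2 * n)) := by
  obtain ⟨C, -, hC⟩ := Asymptotics.bound_of_isBigO_nat_atTop subParts_Icc_sq_add_one_isBigO
  refine ⟨C, fun K _ _ n hn => ?_⟩
  have minGens_le : (minGens K (torusInv K (wSym n)) : ℝ) ≤
      ((subParts n (Finset.Icc 1 n)).card : ℝ) ^ 2 + 1 := by
    exact_mod_cast minGens_torusInv_wSym_le K n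
  have card_le := hC (x := n) (by positivity)
  rw [Real.norm_of_nonneg (by positivity), Real.norm_of_nonneg (by positivity)] at card_le
  exact minGens_le.trans (card_le.trans_eq (mul_assoc _ _ _).symm)

/-- Let `T = k*` act on `B = k[x_{-n}, …, x_0, …, x_n]` with `t · x_i = t^i x_i`.  Then
the cardinality of a minimal generating set of `B^T` is `O(n · e^{12√n · log(2n)})`. -/
theorem symmetric_torus_invariants_minGens_bound [IsAlgClosed k] :
    ∃ C : ℝ, ∀ n : ℕ, 1 ≤ n →
      (minGens k (torusInv k (wSym n)) : ℝ) ≤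
        C * n * Real.exp (12 * Real.sqrt n * Real.log (2 * n)) := by
  have : Infinite k := IsAlgClosed.instInfinite
  exact symmetric_torus_invariants_minGens_bound_general.imp fun _ hC => hC k
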